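/- arXiv:2507.17945 — 9 statements merged into one kernel-verified Lean document; each statement's English description precedes it below -/
import Mathlib

section
/- For all real numbers p and a with a > 0 and sinh(pπ) ≠ 0 (e.g. p ≠ 0), the integral over x from 0 to ∞ of cos(p x) / (cosh x + cosh a) equals π · sin(p a) / (sinh(p π) · sinh a). -/
/-!
The proof rests on the logistic sigmoid `σ x = 1 / (1 + e⁻ˣ)`, through the identity
`sinh a / (cosh x + cosh a) = σ (x + a) - σ (x - a)`.

* The Fourier transform of the logistic density `σ' = σ (1 - σ)` is a Beta integral: substituting
  `u = σ x`, for which `log u - log (1 - u) = x`, turns `∫ e^{ipx} σ'(x) dx` into `B(1 + ip, 1 - ip)`,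
  and the reflection formula for `Γ` gives
  `Γ(1 + ip) Γ(1 - ip) = ip Γ(ip) Γ(1 - ip) = πp / sinh (πp)`.
* Integration by parts on the whole line, whose boundary terms vanish, gives
  `∫ e^{ipx} (σ (x + a) - σ (x - a)) dx = -(1/ip) ∫ e^{ipx} (σ'(x + a) - σ'(x - a)) dx`.
  By translation the right side is `(2 sin (pa) / p)` times the Fourier transform of `σ'`.
* The real part of the left side is an even integral, twice the integral over the half-line.
-/

open Real MeasureTheory Set

/-- Under `u = sigmoid x` this is the integrability of the constant `1` on `(0, 1)`. -/
lemma integrable_sigmoid_deriv : Integrable fun x : ℝ => sigmoid x * (1 - sigmoid x) := by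
  have h := integrableOn_image_iff_integrableOn_abs_deriv_smul (s := univ) (f := sigmoid)
    MeasurableSet.univ (fun x _ => (hasDerivAt_sigmoid x).hasDerivWithinAt)
    sigmoid_injective.injOn (fun _ => (1 : ℝ))
  rw [image_univ, range_sigmoid, integrableOn_univ] at h
  have h2 := h.1 (by simp)
  refine h2.congr (Filter.Eventually.of_forall fun x => ?_)
  have h0 := sigmoid_pos x
  have h1 := sigmoid_lt_one x
  simp only [smul_eq_mul, mul_one]
  exact abs_of_pos (mul_pos h0 (by linarith))

lemma sigmoid_deriv_eq (x : ℝ) :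
    sigmoid x * (1 - sigmoid x) = 1 / (2 * (Real.cosh x + 1)) := by
  rw [sigmoid_def, Real.cosh_eq, Real.exp_neg]
  have := Real.exp_pos x
  field_simp
  ring

lemma sigmoid_sub_eq (x a : ℝ) :
    sigmoid (x + a) - sigmoid (x - a) = Real.sinh a / (Real.cosh x + Real.cosh a) := by
  rw [sigmoid_def, sigmoid_def, Real.cosh_eq, Real.cosh_eq, Real.sinh_eq,
    show -(x + a) = -x + -a by ring, show -(x - a) = -x + a by ring, Real.exp_add, Real.exp_add,
    Real.exp_neg, Real.exp_neg]
  have hx := Real.exp_pos x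
  have ha := Real.exp_pos a
  have : Real.exp a * (Real.exp x ^ 2 + 1) + Real.exp x * (Real.exp a ^ 2 + 1) ≠ 0 := by positivity
  field_simp
  ring

lemma integrable_sigmoid_sub (a : ℝ) :
    Integrable fun x : ℝ => sigmoid (x + a) - sigmoid (x - a) := by
  have hc : Continuous fun x : ℝ => sigmoid (x + a) - sigmoid (x - a) :=
    (continuous_sigmoid.comp (by fun_prop)).sub (continuous_sigmoid.comp (by fun_prop))
  refine (integrable_sigmoid_deriv.const_mul (2 * |Real.sinh a|)).mono' hc.aestronglyMeasurable
    (Filter.Eventually.of_forall fun x => ?_)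
  have h1 := Real.one_le_cosh a
  have h2 := Real.one_le_cosh x
  rw [sigmoid_sub_eq, sigmoid_deriv_eq, norm_div, Real.norm_eq_abs, Real.norm_eq_abs,
    abs_of_pos (by linarith : 0 < Real.cosh x + Real.cosh a)]
  calc |Real.sinh a| / (Real.cosh x + Real.cosh a) ≤ |Real.sinh a| / (Real.cosh x + 1) := by
        gcongr
    _ = _ := by field_simp

lemma integrable_cexp_mul (p : ℝ) {h : ℝ → ℝ} (hh : Integrable h) :
    Integrable fun x : ℝ => Complex.exp ((p * x : ℝ) * Complex.I) * (h x : ℂ) := by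
  refine hh.mono ?_ (Filter.Eventually.of_forall fun x => ?_)
  · exact (Continuous.aestronglyMeasurable (by fun_prop)).mul hh.ofReal.aestronglyMeasurable
  · rw [norm_mul, Complex.norm_exp_ofReal_mul_I, one_mul, Complex.norm_real]

/-- The logit of `sigmoid x` is `x`. -/
lemma log_sigmoid_sub (x : ℝ) : Real.log (sigmoid x) - Real.log (1 - sigmoid x) = x := by
  have h0 := sigmoid_pos x
  rw [← sigmoid_neg, ← sigmoid_mul_rexp_neg, Real.log_mul h0.ne' (Real.exp_pos _).ne', Real.log_exp]
  ring

/-- The characteristic function of the logistic distribution as a Beta integral, by the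
substitution `u = sigmoid x`. -/
lemma fourier_sigmoid_deriv_eq_beta (p : ℝ) :
    ∫ x : ℝ, Complex.exp ((p * x : ℝ) * Complex.I) * ((sigmoid x * (1 - sigmoid x) : ℝ) : ℂ)
      = Complex.betaIntegral (1 + p * Complex.I) (1 - p * Complex.I) := by
  have h := integral_image_eq_integral_abs_deriv_smul (s := univ) (f := sigmoid)
    MeasurableSet.univ (fun x _ => (hasDerivAt_sigmoid x).hasDerivWithinAt)
    sigmoid_injective.injOn
    (fun u : ℝ => (u : ℂ) ^ ((1 + p * Complex.I) - 1) * (1 - (u : ℂ)) ^ ((1 - p * Complex.I) - 1))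
  rw [image_univ, range_sigmoid, setIntegral_univ] at h
  rw [Complex.betaIntegral, intervalIntegral.integral_of_le zero_le_one, integral_Ioc_eq_integral_Ioo,
    h]
  congr 1
  ext x
  have h0 := sigmoid_pos x
  have h1 : 0 < 1 - sigmoid x := by linarith [sigmoid_lt_one x]
  have hc0 : (sigmoid x : ℂ) ≠ 0 := by exact_mod_cast h0.ne'
  have hc1 : ((1 - sigmoid x : ℝ) : ℂ) ≠ 0 := by exact_mod_cast h1.ne'
  rw [abs_of_pos (mul_pos h0 h1), Complex.real_smul, mul_comm]
  congr 1
  rw [← Complex.ofReal_one, ← Complex.ofReal_sub, Complex.cpow_def_of_ne_zero hc0,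
    Complex.cpow_def_of_ne_zero hc1, ← Complex.exp_add, ← Complex.ofReal_log h0.le,
    ← Complex.ofReal_log h1.le]
  congr 1
  conv_lhs => rw [← log_sigmoid_sub x]
  push_cast
  ring

lemma beta_eq (p : ℝ) (hp : p ≠ 0) :
    Complex.betaIntegral (1 + p * Complex.I) (1 - p * Complex.I)
      = ((p * π / Real.sinh (p * π) : ℝ) : ℂ) := by
  have h := Complex.Gamma_mul_Gamma_eq_betaIntegral (s := 1 + p * Complex.I)
    (t := 1 - p * Complex.I) (by simp) (by simp)
  have hpI : (p : ℂ) * Complex.I ≠ 0 := mul_ne_zero (by exact_mod_cast hp) Complex.I_ne_zero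
  have h2 : Complex.Gamma 2 = 1 := by simp
  rw [show (1 + p * Complex.I) + (1 - p * Complex.I) = (2 : ℂ) by ring, h2, one_mul,
    add_comm (1 : ℂ), Complex.Gamma_add_one _ hpI, mul_assoc, Complex.Gamma_mul_Gamma_one_sub,
    ← mul_assoc, Complex.sin_mul_I] at h
  rw [add_comm (1 : ℂ), ← h]
  have hs : Complex.sinh (π * p) ≠ 0 := by
    rw [← Complex.ofReal_mul, ← Complex.ofReal_sinh]
    exact_mod_cast (Real.sinh_ne_zero.2 (mul_ne_zero pi_ne_zero hp))
  push_cast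
  rw [mul_comm (p : ℂ) π]
  field_simp

lemma fourier_sigmoid_deriv (p : ℝ) (hp : p ≠ 0) :
    ∫ x : ℝ, Complex.exp ((p * x : ℝ) * Complex.I) * ((sigmoid x * (1 - sigmoid x) : ℝ) : ℂ)
      = ((p * π / Real.sinh (p * π) : ℝ) : ℂ) := by
  rw [fourier_sigmoid_deriv_eq_beta, beta_eq p hp]

lemma fourier_sigmoid_deriv_shift (p : ℝ) (hp : p ≠ 0) (b : ℝ) :
    ∫ x : ℝ, Complex.exp ((p * x : ℝ) * Complex.I) *
        ((sigmoid (x + b) * (1 - sigmoid (x + b)) : ℝ) : ℂ)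
      = Complex.exp (-((p * b : ℝ) * Complex.I)) * ((p * π / Real.sinh (p * π) : ℝ) : ℂ) := by
  rw [← fourier_sigmoid_deriv p hp,
    ← integral_add_right_eq_self (μ := volume) (fun x : ℝ => Complex.exp ((p * x : ℝ) * Complex.I) *
      ((sigmoid x * (1 - sigmoid x) : ℝ) : ℂ)) b, ← integral_const_mul]
  congr 1
  ext x
  rw [← mul_assoc, ← Complex.exp_add]
  congr 2
  push_cast
  ring

/-- The Fourier transform of `sigmoid (x + a) - sigmoid (x - a)`, by integration by parts. -/
lemma fourier_sigmoid_sub (p : ℝ) (hp : p ≠ 0) (a : ℝ) :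
    ∫ x : ℝ, Complex.exp ((p * x : ℝ) * Complex.I) *
        ((sigmoid (x + a) - sigmoid (x - a) : ℝ) : ℂ)
      = ((2 * π * Real.sin (p * a) / Real.sinh (p * π) : ℝ) : ℂ) := by
  have hpc : (p : ℂ) ≠ 0 := by exact_mod_cast hp
  have hI := Complex.I_ne_zero
  set E : ℝ → ℂ := fun x => Complex.exp ((p * x : ℝ) * Complex.I) with hE
  set G : ℝ → ℝ := fun x => sigmoid (x + a) - sigmoid (x - a) with hG
  set L : ℝ → ℝ := fun x => sigmoid x * (1 - sigmoid x) with hL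
  have hLi : Integrable L := integrable_sigmoid_deriv
  have hLp : Integrable fun x => L (x + a) := hLi.comp_add_right a
  have hLm : Integrable fun x => L (x + -a) := hLi.comp_add_right (-a)
  have hEd : ∀ x, HasDerivAt E (p * Complex.I * E x) x := fun x => by
    have h1 : HasDerivAt (fun x : ℝ => ((p * x : ℝ) : ℂ) * Complex.I) (p * Complex.I) x := by
      have := (((hasDerivAt_id x).const_mul p).ofReal_comp).mul_const Complex.I
      simpa using this
    rw [mul_comm]
    exact h1.cexp
  have hGd : ∀ x, HasDerivAt (fun x => (G x : ℂ)) ((L (x + a) - L (x + -a) : ℝ) : ℂ) x :=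
    fun x => by
      have h1 := (hasDerivAt_sigmoid (x + a)).comp_add_const x a
      have h2 := (hasDerivAt_sigmoid (x - a)).comp_sub_const x a
      have h3 := (h1.sub h2).ofReal_comp
      simp only [hL, ← sub_eq_add_neg]
      exact h3
  have hEG := integrable_cexp_mul p (integrable_sigmoid_sub a)
  have hEL := integrable_cexp_mul p (hLp.sub hLm)
  have ibp := integral_mul_deriv_eq_deriv_mul_of_integrable (u := E) (v := fun x => (G x : ℂ))
    (fun x _ => hEd x) (fun x _ => hGd x) hEL
    ((hEG.const_mul (p * Complex.I)).congr
      (Filter.Eventually.of_forall fun x => (mul_assoc _ _ _).symm)) hEG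
  have hl : ∫ x, E x * ((L (x + a) - L (x + -a) : ℝ) : ℂ)
      = (Complex.exp (-((p * a : ℝ) * Complex.I)) - Complex.exp ((p * a : ℝ) * Complex.I))
        * ((p * π / Real.sinh (p * π) : ℝ) : ℂ) := by
    have := fourier_sigmoid_deriv_shift p hp (-a)
    rw [mul_neg, Complex.ofReal_neg, neg_mul, neg_neg] at this
    rw [sub_mul, ← fourier_sigmoid_deriv_shift p hp a, ← this,
      ← integral_sub (integrable_cexp_mul p hLp) (integrable_cexp_mul p hLm)]
    congr 1
    ext x
    simp only [Complex.ofReal_sub, mul_sub, hE]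
  have hr : ∫ x, p * Complex.I * E x * (G x : ℂ) = p * Complex.I * ∫ x, E x * (G x : ℂ) := by
    simp_rw [mul_assoc (p * Complex.I : ℂ)]
    exact integral_const_mul _ _
  rw [hl, hr] at ibp
  have hsin : Complex.exp (-((p * a : ℝ) * Complex.I)) - Complex.exp ((p * a : ℝ) * Complex.I)
      = -(2 * Complex.I * (Real.sin (p * a) : ℂ)) := by
    rw [Complex.ofReal_sin, Complex.sin, ← neg_mul]
    linear_combination (Complex.exp (-((p * a : ℝ) : ℂ) * Complex.I)
      - Complex.exp (((p * a : ℝ) : ℂ) * Complex.I)) * Complex.I_sq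
  rw [hsin] at ibp
  apply mul_left_cancel₀ (mul_ne_zero hpc hI)
  rw [← neg_inj, ← ibp]
  push_cast
  ring

theorem stmt_0 (p a : ℝ) (ha : 0 < a) (hp : Real.sinh (p * π) ≠ 0) :
    ∫ x in Set.Ioi (0:ℝ), Real.cos (p * x) / (Real.cosh x + Real.cosh a)
      = π * Real.sin (p * a) / (Real.sinh (p * π) * Real.sinh a) := by
  have hp0 : p ≠ 0 := by
    rintro rfl
    simp at hp
  have hsa : Real.sinh a ≠ 0 := (Real.sinh_pos_iff.2 ha).ne'
  have h := congrArg Complex.re (fourier_sigmoid_sub p hp0 a)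
  have hre := integral_re (𝕜 := ℂ) (integrable_cexp_mul p (integrable_sigmoid_sub a))
  rw [Complex.ofReal_re] at h
  replace h := hre.trans h
  simp only [RCLike.re_to_complex] at h
  have habs := integral_comp_abs
    (f := fun x : ℝ => Real.cos (p * x) / (Real.cosh x + Real.cosh a))
  have hcongr : ∀ x : ℝ, (Complex.exp ((p * x : ℝ) * Complex.I) *
      ((sigmoid (x + a) - sigmoid (x - a) : ℝ) : ℂ)).re
      = Real.sinh a * (Real.cos (p * |x|) / (Real.cosh |x| + Real.cosh a)) := fun x => by
    have hcos : Real.cos (p * |x|) = Real.cos (p * x) := by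
      rcases abs_choice x with h | h <;> rw [h]
      rw [mul_neg, Real.cos_neg]
    rw [Complex.re_mul_ofReal, Complex.exp_ofReal_mul_I_re, sigmoid_sub_eq, hcos, Real.cosh_abs]
    ring
  simp_rw [hcongr] at h
  rw [integral_const_mul, habs] at h
  rw [eq_div_iff (mul_ne_zero hp hsa)]
  rw [eq_div_iff hp] at h
  linear_combination h / 2
end

section
/- For every real number p > 0, the integral over a from 0 to ∞ of sin(p a²) / (sinh(p π a) · sinh(2a)) equals (1/8) times the integral over x from 0 to ∞ of 1 / (cosh x · cosh((π/2) p x)). -/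
/-!
Put `F(x, y) = cos (p x y) / (cosh x (cosh x + cosh y))`, which is absolutely integrable on the
plane because `|F(x, y)| ≤ sech x sech y`. The double integral of `F` is computed in two ways.

* Symmetrization: `F(x, y) + F(y, x) = cos (p x y) / (cosh x cosh y)`, because
  `1 / (A (A + B)) + 1 / (B (A + B)) = 1 / (A B)`. The Fourier transform of `sech`
  (`fourier_sech`) then gives `2 ∬ F = π ∫ dx / (cosh x cosh (π p x / 2))`.
* Integration in `y` first: the Fourier transform of `1 / (cosh x + cosh y)` in `y` at frequency
  `p x` is `2 π sin (p x ^ 2) / (sinh x sinh (p π x))`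
  (`integral_cos_mul_div_cosh_add_cosh`), so that, by `sinh 2x = 2 sinh x cosh x`,
  `∬ F = 4 π ∫ sin (p x ^ 2) / (sinh (p π x) sinh (2 x)) dx`.

Both integrands are even, so comparing the two values gives the identity on the half-line.

The two Fourier transforms come from the Beta integral `B(r + iw, r - iw)`, which under
`t = e ^ x / (2 cosh x)` becomes the Fourier transform of `(2 cosh x) ^ (-2r)` (`beta_cosh`).
The case `r = 1/2` is `sech`; the case `r = 1` is `sech ^ 2`, and `1 / (cosh 2a + cosh 2x)` is a
multiple of the integral of `sech ^ 2 (x + t)` over `|t| ≤ a` (`integral_inv_cosh_add_sq`).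
-/

open Real MeasureTheory Set

/-- The integrand of `B(r + iw, r - iw)` after the substitution `t = sigmoid (2 * x)`, for which
`t = e ^ x / (2 cosh x)` and `1 - t = e ^ (-x) / (2 cosh x)`. -/
lemma betaIntegrand_sigmoid (r w x : ℝ) :
    |sigmoid (2 * x) * (1 - sigmoid (2 * x)) * 2| •
      (((sigmoid (2 * x) : ℝ) : ℂ) ^ ((r + w * Complex.I : ℂ) - 1) *
        (1 - ((sigmoid (2 * x) : ℝ) : ℂ)) ^ ((r - w * Complex.I : ℂ) - 1)) =
      2 * (((2 * cosh x) ^ (-2 * r) : ℝ) : ℂ) * Complex.exp (((2 * w * x : ℝ) : ℂ) * Complex.I) := by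
  have hc : 0 < 2 * cosh x := by positivity
  have h1 : sigmoid (2 * x) = exp (x - log (2 * cosh x)) := by
    rw [exp_sub, exp_log hc, sigmoid_def, cosh_eq, inv_eq_one_div, div_eq_div_iff (by positivity)
      (by positivity), mul_add, mul_one, ← exp_add]
    ring_nf
  have h2 : 1 - sigmoid (2 * x) = exp (-x - log (2 * cosh x)) := by
    have : exp (x - log (2 * cosh x)) + exp (-x - log (2 * cosh x)) = 1 := by
      rw [exp_sub, exp_sub, exp_log hc, ← add_div, cosh_eq]
      have : exp x + exp (-x) ≠ 0 := by positivity
      field_simp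
    linarith
  have h3 : (1 : ℂ) - ((sigmoid (2 * x) : ℝ) : ℂ) = ((exp (-x - log (2 * cosh x)) : ℝ) : ℂ) := by
    rw [← h2]; push_cast; ring
  have key (y : ℝ) (s : ℂ) : ((exp y : ℝ) : ℂ) ^ s = Complex.exp (y * s) := by
    rw [Complex.cpow_def_of_ne_zero (by exact_mod_cast (exp_pos y).ne'), ← Complex.ofReal_log
      (exp_pos y).le, log_exp]
  rw [h3, h2, h1, key, key, abs_of_pos (by positivity), rpow_def_of_pos hc, Complex.real_smul]
  push_cast
  rw [mul_comm _ (2 : ℂ), mul_assoc, mul_assoc, mul_assoc]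
  simp only [← Complex.exp_add]
  congr 2
  ring

/-- Fourier transform of `(2 cosh x) ^ (-2r)`: the Beta integral `B(r + iw, r - iw)` in the
variable `t = sigmoid (2 * x)`. -/
lemma beta_cosh (r w : ℝ) (hr : 0 < r) :
    Integrable (fun x : ℝ => 2 * (((2 * cosh x) ^ (-2 * r) : ℝ) : ℂ) *
      Complex.exp (((2 * w * x : ℝ) : ℂ) * Complex.I)) ∧
    ∫ x : ℝ, 2 * (((2 * cosh x) ^ (-2 * r) : ℝ) : ℂ) *
      Complex.exp (((2 * w * x : ℝ) : ℂ) * Complex.I) =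
      Complex.Gamma (r + w * Complex.I) * Complex.Gamma (r - w * Complex.I) /
        Complex.Gamma (2 * r) := by
  have hu : 0 < (r + w * Complex.I : ℂ).re := by simpa
  have hv : 0 < (r - w * Complex.I : ℂ).re := by simpa
  have himg : Set.image (fun x : ℝ => sigmoid (2 * x)) univ = Ioo 0 1 := by
    rw [image_univ, ← range_sigmoid]
    exact (mul_left_surjective₀ (two_ne_zero)).range_comp sigmoid
  have hd (x : ℝ) (_ : x ∈ univ) : HasDerivWithinAt (fun x : ℝ => sigmoid (2 * x))
      (sigmoid (2 * x) * (1 - sigmoid (2 * x)) * 2) univ x := by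
    have := (hasDerivAt_sigmoid (2 * x)).comp x ((hasDerivAt_id x).const_mul 2)
    simpa [Function.comp_def] using this
  have hinj : InjOn (fun x : ℝ => sigmoid (2 * x)) univ := fun a _ b _ h => by
    simpa using sigmoid_injective h
  have hB := Complex.betaIntegral_convergent hu hv
  rw [intervalIntegrable_iff_integrableOn_Ioo_of_le zero_le_one, ← himg,
    integrableOn_image_iff_integrableOn_abs_deriv_smul MeasurableSet.univ hd hinj] at hB
  have hI := Complex.betaIntegral_eq_Gamma_mul_div _ _ hu hv
  rw [Complex.betaIntegral, intervalIntegral.integral_of_le zero_le_one,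
    integral_Ioc_eq_integral_Ioo, ← himg,
    integral_image_eq_integral_abs_deriv_smul MeasurableSet.univ hd hinj] at hI
  simp only [betaIntegrand_sigmoid, Measure.restrict_univ, integrableOn_univ] at hB hI
  refine ⟨hB, hI.trans ?_⟩
  congr 2
  ring

/-- The case `r = 1 / 2` of `beta_cosh`, with Euler's reflection formula. -/
lemma fourier_sech (w : ℝ) :
    Integrable (fun x : ℝ => (cosh x)⁻¹) ∧
    ∫ x : ℝ, cos (2 * w * x) / cosh x = π / cosh (π * w) := by
  have e (w x : ℝ) : (2 * (((2 * cosh x) ^ (-2 * (1 / 2 : ℝ)) : ℝ) : ℂ) *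
      Complex.exp (((2 * w * x : ℝ) : ℂ) * Complex.I)).re = cos (2 * w * x) / cosh x := by
    rw [show (-2 * (1 / 2 : ℝ)) = -1 by norm_num, rpow_neg_one,
      show (2 : ℂ) * (((2 * cosh x)⁻¹ : ℝ) : ℂ) = ((2 * (2 * cosh x)⁻¹ : ℝ) : ℂ) by push_cast; rfl,
      Complex.re_ofReal_mul, Complex.exp_ofReal_mul_I_re]
    field_simp
  constructor
  · have := (beta_cosh (1 / 2) 0 (by norm_num)).1.re
    simp only [RCLike.re_eq_complex_re, e] at this
    simpa using this
  · obtain ⟨hi, h⟩ := beta_cosh (1 / 2) w (by norm_num)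
    have h' := congrArg Complex.re h
    have hr := integral_re hi
    simp only [RCLike.re_eq_complex_re, e] at hr
    rw [hr, h']
    have : (((1 / 2 : ℝ) : ℂ) - w * Complex.I) = 1 - (((1 / 2 : ℝ) : ℂ) + w * Complex.I) := by
      push_cast; ring
    rw [this, Complex.Gamma_mul_Gamma_one_sub]
    have : (π : ℂ) * (((1 / 2 : ℝ) : ℂ) + w * Complex.I) = ((π * w : ℝ) : ℂ) * Complex.I + π / 2 := by
      push_cast; ring
    rw [this, Complex.sin_add_pi_div_two, Complex.cos_mul_I, ← Complex.ofReal_cosh,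
      show (2 : ℂ) * ((1 / 2 : ℝ) : ℂ) = 1 by push_cast; norm_num, Complex.Gamma_one, div_one]
    exact_mod_cast rfl

/-- The case `r = 1` of `beta_cosh`, with Euler's reflection formula. -/
lemma fourier_sech_sq (w : ℝ) (hw : w ≠ 0) :
    Integrable (fun x : ℝ => (cosh x ^ 2)⁻¹) ∧
    ∫ x : ℝ, Complex.exp (((2 * w * x : ℝ) : ℂ) * Complex.I) * ((cosh x ^ 2)⁻¹ : ℝ) =
      ((2 * π * w / sinh (π * w) : ℝ) : ℂ) := by
  have e (w x : ℝ) : (2 * (((2 * cosh x) ^ (-2 * (1 : ℝ)) : ℝ) : ℂ) *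
      Complex.exp (((2 * w * x : ℝ) : ℂ) * Complex.I)) =
      (1 / 2) * (Complex.exp (((2 * w * x : ℝ) : ℂ) * Complex.I) * ((cosh x ^ 2)⁻¹ : ℝ)) := by
    rw [show (-2 * (1 : ℝ)) = -(2 : ℕ) by norm_num, rpow_neg (by positivity), rpow_natCast]
    have : (cosh x : ℂ) ≠ 0 := by exact_mod_cast (cosh_pos x).ne'
    push_cast at *
    field_simp
  constructor
  · have := ((beta_cosh 1 0 (by norm_num)).1.const_mul 2).re
    simp only [RCLike.re_eq_complex_re, e] at this
    refine this.congr (.of_forall fun x => ?_)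
    dsimp only
    rw [← mul_assoc, mul_one_div_cancel (two_ne_zero), one_mul, Complex.re_mul_ofReal]
    simp
  · obtain ⟨hi, h⟩ := beta_cosh 1 w (by norm_num)
    simp only [e] at h
    rw [integral_const_mul] at h
    have hG : Complex.Gamma ((1 : ℝ) + w * Complex.I) * Complex.Gamma ((1 : ℝ) - w * Complex.I) /
        Complex.Gamma (2 * (1 : ℝ)) = ((π * w / sinh (π * w) : ℝ) : ℂ) := by
      have hwI : (w : ℂ) * Complex.I ≠ 0 := by simpa
      have hs : (Complex.sinh (π * w)) ≠ 0 := by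
        rw [← Complex.ofReal_mul, ← Complex.ofReal_sinh]
        exact_mod_cast sinh_ne_zero.2 (by positivity)
      have h2 : Complex.Gamma 2 = 1 := by simp
      rw [Complex.ofReal_one, add_comm, Complex.Gamma_add_one _ hwI, mul_assoc,
        Complex.Gamma_mul_Gamma_one_sub, ← mul_assoc, Complex.sin_mul_I, mul_one, h2, div_one]
      push_cast
      field_simp
    rw [hG] at h
    rw [show (2 * π * w / sinh (π * w) : ℝ) = 2 * (π * w / sinh (π * w)) by ring,
      Complex.ofReal_mul, ← h]
    push_cast
    ring

lemma integral_cos_div_cosh_add_sq (w t : ℝ) (hw : w ≠ 0) :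
    ∫ x : ℝ, cos (2 * w * x) * (cosh (x + t) ^ 2)⁻¹ =
      cos (2 * w * t) * (2 * π * w / sinh (π * w)) := by
  obtain ⟨hi, h⟩ := fourier_sech_sq w hw
  have hshift (x : ℝ) : Complex.exp (((2 * w * x : ℝ) : ℂ) * Complex.I) *
      ((cosh (x + t) ^ 2)⁻¹ : ℝ) = Complex.exp (((-(2 * w * t) : ℝ) : ℂ) * Complex.I) *
      (Complex.exp (((2 * w * (x + t) : ℝ) : ℂ) * Complex.I) * ((cosh (x + t) ^ 2)⁻¹ : ℝ)) := by
    rw [← mul_assoc, ← Complex.exp_add]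
    congr 2
    push_cast
    ring
  have hI : ∫ x : ℝ, Complex.exp (((2 * w * x : ℝ) : ℂ) * Complex.I) *
      ((cosh (x + t) ^ 2)⁻¹ : ℝ) = Complex.exp (((-(2 * w * t) : ℝ) : ℂ) * Complex.I) *
        ((2 * π * w / sinh (π * w) : ℝ) : ℂ) := by
    simp_rw [hshift]
    rw [integral_const_mul, integral_add_right_eq_self (fun x : ℝ =>
      Complex.exp (((2 * w * x : ℝ) : ℂ) * Complex.I) * ((cosh x ^ 2)⁻¹ : ℝ)), h]
  have hint : Integrable (fun x : ℝ => Complex.exp (((2 * w * x : ℝ) : ℂ) * Complex.I) *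
      ((cosh (x + t) ^ 2)⁻¹ : ℝ)) := by
    refine (hi.comp_add_right t).ofReal.bdd_mul (c := 1)
      (by fun_prop) (.of_forall fun x => ?_)
    rw [Complex.norm_exp_ofReal_mul_I]
  have hr := integral_re hint
  rw [hI] at hr
  simp only [RCLike.re_eq_complex_re, Complex.re_mul_ofReal, Complex.exp_ofReal_mul_I_re,
    cos_neg] at hr
  exact hr

/-- Domination of the translates of `sech ^ 2`, locally uniform in `t`. -/
lemma inv_cosh_add_sq_le (x t : ℝ) :
    (cosh (x + t) ^ 2)⁻¹ ≤ exp |t| ^ 2 * (cosh x ^ 2)⁻¹ := by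
  have h : cosh x ≤ exp |t| * cosh (x + t) := by
    rw [cosh_eq, cosh_eq, ← mul_div_assoc, mul_add, ← exp_add, ← exp_add]
    gcongr
    · linarith [neg_abs_le t]
    · linarith [le_abs_self t]
  have h2 : cosh x ^ 2 ≤ exp |t| ^ 2 * cosh (x + t) ^ 2 := by
    rw [← mul_pow]; gcongr
  rw [← div_eq_mul_inv, inv_eq_one_div, div_le_div_iff₀ (by positivity) (by positivity)]
  linarith

lemma integral_inv_cosh_add_sq (x a : ℝ) :
    ∫ t in (-a)..a, (cosh (x + t) ^ 2)⁻¹ = 2 * sinh (2 * a) / (cosh (2 * a) + cosh (2 * x)) := by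
  -- `sinh / cosh` is the primitive `tanh` of `sech ^ 2`.
  have hd (t : ℝ) : HasDerivAt (fun t => sinh (x + t) / cosh (x + t)) ((cosh (x + t) ^ 2)⁻¹) t := by
    have h := ((hasDerivAt_sinh (x + t)).div (hasDerivAt_cosh (x + t))
      (cosh_pos _).ne').comp_const_add x t
    have e : (cosh (x + t) * cosh (x + t) - sinh (x + t) * sinh (x + t)) / cosh (x + t) ^ 2 =
        (cosh (x + t) ^ 2)⁻¹ := by
      rw [inv_eq_one_div]
      congr 1
      linarith [cosh_sq (x + t)]
    rw [e] at h
    exact h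
  rw [intervalIntegral.integral_eq_sub_of_hasDerivAt (fun t _ => hd t)
    (Continuous.intervalIntegrable (by fun_prop (disch := intro; positivity)) _ _)]
  have h1 := cosh_pos (x + a)
  have h2 := cosh_pos (x + -a)
  rw [div_sub_div _ _ h1.ne' h2.ne', div_eq_div_iff (by positivity) (by positivity)]
  have e1 : sinh (x + a) * cosh (x + -a) - cosh (x + a) * sinh (x + -a) = sinh (2 * a) := by
    rw [← sinh_sub]; ring_nf
  have e2 : cosh (2 * a) + cosh (2 * x) = 2 * (cosh (x + a) * cosh (x + -a)) := by
    rw [show 2 * a = (x + a) - (x + -a) by ring, show 2 * x = (x + a) + (x + -a) by ring,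
      cosh_sub, cosh_add (x + a)]
    ring
  rw [e1, e2]; ring

/-- Since `1 / (cosh 2a + cosh 2x)` is, up to a constant, the average of `sech ^ 2 (x + t)` over
`|t| ≤ a`, its Fourier transform is the transform of `sech ^ 2` multiplied by the average of
`cos (2 * w * t)`. -/
lemma fourier_inv_cosh_add_cosh (w a : ℝ) (hw : w ≠ 0) (ha : a ≠ 0) :
    ∫ x : ℝ, cos (2 * w * x) / (cosh (2 * a) + cosh (2 * x)) =
      π * sin (2 * w * a) / (sinh (2 * a) * sinh (π * w)) := by
  have hfin : IsFiniteMeasure (volume.restrict (uIoc (-a) a)) :=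
    isFiniteMeasure_restrict.2 (by simp [uIoc])
  have hint : Integrable (Function.uncurry fun t x : ℝ => cos (2 * w * x) * (cosh (x + t) ^ 2)⁻¹)
      ((volume.restrict (uIoc (-a) a)).prod volume) := by
    have hdom : Integrable (fun z : ℝ × ℝ => exp |a| ^ 2 * (cosh z.2 ^ 2)⁻¹)
        ((volume.restrict (uIoc (-a) a)).prod volume) :=
      Integrable.mul_prod (f := fun _ : ℝ => exp |a| ^ 2) (g := fun x : ℝ => (cosh x ^ 2)⁻¹)
        (integrable_const _) (fourier_sech_sq w hw).1
    refine hdom.mono' (Continuous.aestronglyMeasurable ?_) ?_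
    · unfold Function.uncurry
      fun_prop (disch := intro; positivity)
    · have hmem : ∀ᵐ z ∂((volume.restrict (uIoc (-a) a)).prod (volume : Measure ℝ)),
          z.1 ∈ uIoc (-a) a :=
        Measure.quasiMeasurePreserving_fst.ae (ae_restrict_mem measurableSet_uIoc)
      filter_upwards [hmem] with z hz
      have hta : |z.1| ≤ |a| := by
        rcases mem_uIoc.1 hz with h | h
        · exact abs_le_abs h.2 (by linarith [h.1])
        · rw [abs_of_nonpos (by linarith : a ≤ 0)]
          exact abs_le.2 ⟨by linarith, by linarith⟩
      have h1 := inv_cosh_add_sq_le z.2 z.1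
      simp only [Function.uncurry, norm_mul, norm_inv, norm_pow, norm_eq_abs, abs_of_pos (cosh_pos _)]
      calc |cos (2 * w * z.2)| * (cosh (z.2 + z.1) ^ 2)⁻¹
          ≤ 1 * (exp |z.1| ^ 2 * (cosh z.2 ^ 2)⁻¹) := by
            gcongr; exact abs_cos_le_one _
        _ ≤ exp |a| ^ 2 * (cosh z.2 ^ 2)⁻¹ := by
            rw [one_mul]; gcongr
  have hs := intervalIntegral_integral_swap hint
  simp_rw [integral_cos_div_cosh_add_sq w _ hw, intervalIntegral.integral_const_mul,
    integral_inv_cosh_add_sq, intervalIntegral.integral_mul_const] at hs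
  have hc : ∫ t in (-a)..a, cos (2 * w * t) = sin (2 * w * a) / w := by
    rw [intervalIntegral.integral_comp_mul_left _ (by positivity), integral_cos, mul_neg, sin_neg,
      smul_eq_mul]
    field_simp
    ring
  have hL (x : ℝ) : cos (2 * w * x) * (2 * sinh (2 * a) / (cosh (2 * a) + cosh (2 * x))) =
      2 * sinh (2 * a) * (cos (2 * w * x) / (cosh (2 * a) + cosh (2 * x))) := by ring
  simp_rw [hL] at hs
  rw [hc, integral_const_mul] at hs
  have hsa : sinh (2 * a) ≠ 0 := sinh_ne_zero.2 (by positivity)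
  have hsw : sinh (π * w) ≠ 0 := sinh_ne_zero.2 (by positivity)
  field_simp at hs ⊢
  linarith

/-- `fourier_inv_cosh_add_cosh` at frequency `p * x`: the choice of the frequency proportional to
the shift is what produces the quadratic phase `sin (p * x ^ 2)`. -/
lemma integral_cos_mul_div_cosh_add_cosh (p x : ℝ) (hp : p ≠ 0) (hx : x ≠ 0) :
    ∫ y : ℝ, cos (p * x * y) / (cosh x + cosh y) =
      2 * π * sin (p * x ^ 2) / (sinh x * sinh (p * π * x)) := by
  have h := fourier_inv_cosh_add_cosh (p * x) (x / 2) (by positivity) (by positivity)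
  have h2 := Measure.integral_comp_mul_left (fun y => cos (p * x * y) / (cosh x + cosh y)) 2
  have e (y : ℝ) : p * x * (2 * y) = 2 * (p * x) * y := by ring
  simp only [e] at h2
  rw [show 2 * (x / 2) = x by ring, h2, show 2 * (p * x) * (x / 2) = p * x ^ 2 by ring,
    show π * (p * x) = p * π * x by ring] at h
  simp only [smul_eq_mul] at h
  rw [abs_of_pos (by norm_num)] at h
  have : ∀ I : ℝ, I = 2 * (2⁻¹ * I) := fun I => by ring
  rw [this (∫ _, _), h]
  ring

lemma integral_eq_two_mul_of_even (f : ℝ → ℝ) (hf : ∀ x, f (-x) = f x) :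
    ∫ x, f x = 2 * ∫ x in Ioi 0, f x := by
  rw [← integral_comp_abs]
  congr with x
  rcases abs_choice x with h | h <;> simp [h, hf]

theorem stmt_1 (p : ℝ) (hp : 0 < p) :
    ∫ a in Set.Ioi (0:ℝ), Real.sin (p * a ^ 2) / (Real.sinh (p * π * a) * Real.sinh (2 * a))
      = (1 / 8) * ∫ x in Set.Ioi (0:ℝ), 1 / (Real.cosh x * Real.cosh ((π / 2) * p * x)) := by
  have hsech := (fourier_sech 0).1
  -- `F` is kept opaque so that unification does not unfold it inside the integrals below.
  obtain ⟨F, hF⟩ : ∃ F : ℝ × ℝ → ℝ,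
      F = fun z => cos (p * z.1 * z.2) / (cosh z.1 * (cosh z.1 + cosh z.2)) := ⟨_, rfl⟩
  have hFint : Integrable F (volume.prod volume) := by
    refine (Integrable.mul_prod hsech hsech).mono' (Continuous.aestronglyMeasurable ?_)
      (.of_forall fun z => ?_)
    · rw [hF]
      fun_prop (disch := intro; positivity)
    · have h1 := cosh_pos z.1
      have h2 := cosh_pos z.2
      rw [hF, norm_div, norm_eq_abs, norm_eq_abs,
        abs_of_pos (show 0 < cosh z.1 * (cosh z.1 + cosh z.2) by positivity), ← mul_inv,
        inv_eq_one_div]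
      gcongr
      · exact abs_cos_le_one _
      · linarith
  have hFs : Integrable (fun z => F z.swap) (volume.prod volume) := hFint.swap
  have hadd : Integrable (fun z => F z + F z.swap) (volume.prod volume) := hFint.add hFs
  have hswap (z : ℝ × ℝ) : F z + F z.swap = (cosh z.1)⁻¹ * (cos (p * z.1 * z.2) / cosh z.2) := by
    have h1 := cosh_pos z.1
    have h2 := cosh_pos z.2
    simp only [hF, Prod.fst_swap, Prod.snd_swap]
    rw [show p * z.2 * z.1 = p * z.1 * z.2 by ring]
    field_simp
    ring
  have hsum : 2 * ∫ z, F z ∂(volume.prod volume) =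
      π * ∫ x : ℝ, 1 / (cosh x * cosh ((π / 2) * p * x)) := by
    have h1 : ∫ z, (F z + F z.swap) ∂(volume.prod volume) =
        2 * ∫ z, F z ∂(volume.prod volume) := by
      rw [integral_add hFint hFs, integral_prod_swap]; ring
    rw [← h1, integral_prod _ hadd, ← integral_const_mul]
    congr with x
    simp_rw [hswap]
    rw [integral_const_mul]
    have h2 := (fourier_sech (p * x / 2)).2
    rw [show 2 * (p * x / 2) = p * x by ring, show π * (p * x / 2) = (π / 2) * p * x by ring] at h2
    rw [h2]
    field_simp
  have hiter : ∫ z, F z ∂(volume.prod volume) =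
      4 * π * ∫ x : ℝ, sin (p * x ^ 2) / (sinh (p * π * x) * sinh (2 * x)) := by
    rw [integral_prod _ hFint, ← integral_const_mul]
    -- The inner formula fails only at `x = 0`, where its right-hand side is a division by zero.
    refine integral_congr_ae ?_
    filter_upwards [Measure.ae_ne volume (0 : ℝ)] with x hx
    have h1 (y : ℝ) : F (x, y) = (cosh x)⁻¹ * (cos (p * x * y) / (cosh x + cosh y)) := by
      simp only [hF]
      rw [inv_mul_eq_div, div_div, mul_comm (cosh x)]
    simp_rw [h1]
    rw [integral_const_mul, integral_cos_mul_div_cosh_add_cosh p x hp.ne' hx, sinh_two_mul]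
    have := sinh_ne_zero.2 hx
    have := sinh_ne_zero.2 (show p * π * x ≠ 0 by positivity)
    have := cosh_pos x
    field_simp
    ring
  rw [hiter, integral_eq_two_mul_of_even _ (fun x => ?_), integral_eq_two_mul_of_even _ (fun x => ?_)]
    at hsum
  · have := pi_pos
    field_simp at hsum ⊢
    linarith
  · simp
  · simp
end

section
/- The integral over a from 0 to ∞ of sin((2/π) a²) / sinh(2a)² equals 1/8. -/
/-!
After the substitution `x = 2a` and evenness, the claim is `∫_ℝ sin(x²/2π)/sinh² x dx = 1/2`. The
integrand is the imaginary part of `(E(x) - 1)/sinh² x` with `E(z) = exp(i z²/2π)`, and the proof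
is a contour integration in the strip `0 ≤ Im z ≤ π`.

Since `E(z + πi) = -i e^{-z} E(z)`, the function `G(z) = E(z)(e^z - i)/(2 sinh³ z)` solves the
difference equation `G(z) - G(z + πi) = E(z)/sinh² z`. It has a triple pole at `0`; the function
`Q(z) = (1-i)/2 · cosh z/sinh³ z + (1/2 + iz/π)/sinh² z + c coth z` has the same principal part
there for the right constant `c` (`cothCoeff`), and `Q(z) - Q(z + πi) = 1/sinh² z`.
Hence `H = G - Q` (`kern`) satisfies `H(z) - H(z + πi) = (E(z) - 1)/sinh² z` (`kern_sub_kern`),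
extends continuously to `0` and to `πi` (`exists_extension`), and tends to `∓c` exponentially fast
as `Re z → ±∞` (`norm_kern_add_le`). Cauchy's theorem on `[-T, T] × [0, π]` as `T → ∞` gives
`∫_ℝ (E - 1)/sinh² = 2πi c`, whose imaginary part is `1/2`.
-/

open Real MeasureTheory Set

/-! ### Removable singularities against `sinh³` -/

open Filter Topology in
/-- An entire function vanishing to order three at `0`, divided by `sinh³`, has a limit at `0`. -/
lemma tendsto_div_sinh_cube {N N₁ : ℂ → ℂ} (hN : ∀ z, HasDerivAt N (N₁ z) z)
    (hN₁ : HasDerivAt N₁ 0 0) (h0 : N 0 = 0) (h1 : N₁ 0 = 0) :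
    ∃ L, Tendsto (fun z => N z / Complex.sinh z ^ 3) (𝓝[≠] 0) (𝓝 L) := by
  have hd : Differentiable ℂ N := fun z => (hN z).differentiableAt
  have hA : AnalyticAt ℂ N 0 := hd.analyticAt 0
  have hder : deriv N = N₁ := funext fun z => (hN z).deriv
  have hord : ((3 : ℕ) : ℕ∞) ≤ analyticOrderAt N 0 := by
    rw [natCast_le_analyticOrderAt_iff_iteratedDeriv_eq_zero hA]
    intro i hi
    interval_cases i
    · simpa using h0
    · simpa [iteratedDeriv_one, hder] using h1
    · rw [iteratedDeriv_succ, iteratedDeriv_one, hder, hN₁.deriv]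
  obtain ⟨g, hg, hNg⟩ := (natCast_le_analyticOrderAt hA).1 hord
  have hs : ContinuousAt (dslope Complex.sinh 0) 0 :=
    continuousAt_dslope_same.2 Complex.differentiable_sinh.differentiableAt
  have hc : ContinuousAt (fun z => g z / dslope Complex.sinh 0 z ^ 3) 0 :=
    hg.continuousAt.div (hs.pow 3) (by simp)
  refine ⟨_, (hc.tendsto.mono_left nhdsWithin_le_nhds).congr' ?_⟩
  filter_upwards [nhdsWithin_le_nhds hNg, self_mem_nhdsWithin] with z hz hz0
  have hz0 : z ≠ 0 := hz0
  rw [hz, dslope_of_ne _ hz0, slope_def_field]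
  simp only [sub_zero, Complex.sinh_zero, smul_eq_mul]
  rw [div_pow, div_div_eq_mul_div, mul_comm]

/-! ### The solution of the difference equation -/

/-- The complex Gaussian phase `exp(i z² / 2π)`. -/
noncomputable def gaussPhase (z : ℂ) : ℂ := Complex.exp (Complex.I * z ^ 2 / (2 * π))

/-- The coefficient of `coth` in the correction term. It is forced by the vanishing of the second
derivative of `numer` at `0`. -/
noncomputable def cothCoeff : ℂ :=
  1 / 4 + (1 + Complex.I) / (4 * π) - (1 - Complex.I) / 4 - Complex.I / π

/-- The numerator of `kern` over the common denominator `sinh³`. -/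
noncomputable def numer (z : ℂ) : ℂ :=
  gaussPhase z * (Complex.exp z - Complex.I) / 2 - (1 - Complex.I) / 2 * Complex.cosh z
    - (1 / 2 + Complex.I * z / π) * Complex.sinh z
    - cothCoeff * (Complex.cosh z * Complex.sinh z ^ 2)

/-- The function to which Cauchy's theorem is applied; at the zeros `0` and `πi` of `sinh` its value
is the junk value `0`, not the limit. -/
noncomputable def kern (z : ℂ) : ℂ := numer z / Complex.sinh z ^ 3

lemma hasDerivAt_gaussPhase (z : ℂ) :
    HasDerivAt gaussPhase (Complex.I * z / π * gaussPhase z) z := by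
  have hpi : (π : ℂ) ≠ 0 := by exact_mod_cast pi_ne_zero
  have h : HasDerivAt (fun z : ℂ => Complex.I * z ^ 2 / (2 * π)) (Complex.I * z / π) z := by
    refine (((hasDerivAt_pow 2 z).const_mul Complex.I).div_const (2 * (π : ℂ))).congr_deriv ?_
    field_simp
    norm_num
  exact h.cexp.congr_deriv (mul_comm _ _)

open Filter Topology in
/-- The correction terms were chosen to make the 2-jet of `numer` at `0` vanish. -/
lemma exists_tendsto_kern_zero : ∃ L, Tendsto kern (𝓝[≠] 0) (𝓝 L) := by
  have hpi : (π : ℂ) ≠ 0 := by exact_mod_cast pi_ne_zero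
  refine tendsto_div_sinh_cube (N := numer)
    (N₁ := fun z => (Complex.I * z / π * gaussPhase z * (Complex.exp z - Complex.I)
        + gaussPhase z * Complex.exp z) / 2 - (1 - Complex.I) / 2 * Complex.sinh z
      - (Complex.I / π * Complex.sinh z + (1 / 2 + Complex.I * z / π) * Complex.cosh z)
      - cothCoeff * (Complex.sinh z * Complex.sinh z ^ 2
        + Complex.cosh z * (2 * Complex.sinh z * Complex.cosh z))) (fun z => ?_) ?_ ?_ ?_
  · have hl : HasDerivAt (fun z : ℂ => 1 / 2 + Complex.I * z / π) (Complex.I / π) z := by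
      simpa using (((hasDerivAt_id z).const_mul Complex.I).div_const (π : ℂ)).const_add (1 / 2)
    have hs := Complex.hasDerivAt_sinh z
    have hc := Complex.hasDerivAt_cosh z
    have h2 : HasDerivAt (fun z => Complex.sinh z ^ 2) (2 * Complex.sinh z * Complex.cosh z) z := by
      simpa using hs.fun_pow 2
    exact (((((hasDerivAt_gaussPhase z).mul ((Complex.hasDerivAt_exp z).sub_const _)).div_const
      2).sub (hc.const_mul _)).sub (hl.mul hs)).sub ((hc.mul h2).const_mul _)
  · have hl : HasDerivAt (fun z : ℂ => 1 / 2 + Complex.I * z / π) (Complex.I / π) 0 := by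
      simpa using (((hasDerivAt_id (0:ℂ)).const_mul Complex.I).div_const (π : ℂ)).const_add (1 / 2)
    have hl' : HasDerivAt (fun z : ℂ => Complex.I * z / π) (Complex.I / π) 0 := by
      simpa using (((hasDerivAt_id (0:ℂ)).const_mul Complex.I).div_const (π : ℂ))
    have hs := Complex.hasDerivAt_sinh 0
    have hc := Complex.hasDerivAt_cosh 0
    have hg := hasDerivAt_gaussPhase 0
    have he := Complex.hasDerivAt_exp 0
    have h2 : HasDerivAt (fun z => Complex.sinh z ^ 2)
        (2 * Complex.sinh 0 * Complex.cosh 0) 0 := by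
      simpa using hs.fun_pow 2
    refine HasDerivAt.congr_deriv ((((((hl'.mul hg).mul (he.sub_const Complex.I)).add (hg.mul he)).div_const 2).sub
      (hs.const_mul _)).sub ((hs.const_mul _).add (hl.mul hc)) |>.sub
      (((hs.mul h2).add (hc.mul ((hs.const_mul 2).mul hc))).const_mul cothCoeff)) ?_
    simp [gaussPhase, cothCoeff]
    field_simp
    ring_nf
    try simp
    try ring
  · simp [numer, gaussPhase]
  · simp [gaussPhase]

lemma gaussPhase_add_pi_I (z : ℂ) :
    gaussPhase (z + π * Complex.I) = -Complex.I * Complex.exp (-z) * gaussPhase z := by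
  have hpi : (π : ℂ) ≠ 0 := by exact_mod_cast pi_ne_zero
  have h : Complex.I * (z + π * Complex.I) ^ 2 / (2 * π)
      = -(π / 2 * Complex.I) + -z + Complex.I * z ^ 2 / (2 * π) := by
    field_simp
    ring_nf
    simp only [Complex.I_sq, show Complex.I ^ 3 = -Complex.I from Complex.I_pow_three]
    ring
  rw [gaussPhase, h, Complex.exp_add, Complex.exp_add, Complex.exp_neg (π / 2 * Complex.I),
    Complex.exp_pi_div_two_mul_I, Complex.inv_I]
  rfl

/-- The difference equation; the right side is `(gaussPhase z - 1) / sinh² z`, written over `sinh³`.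
It also holds, as `0 = 0`, at the zeros of `sinh`. -/
lemma kern_sub_kern (z : ℂ) : kern z - kern (z + π * Complex.I) =
    (gaussPhase z - 1) * Complex.sinh z / Complex.sinh z ^ 3 := by
  have hpi : (π : ℂ) ≠ 0 := by exact_mod_cast pi_ne_zero
  have he : Complex.exp (z + π * Complex.I) = -Complex.exp z := by
    simp [Complex.exp_add, Complex.exp_pi_mul_I]
  have h1 : Complex.I * (z + π * Complex.I) / π = Complex.I * z / π - 1 := by
    field_simp
    ring_nf
    simp only [Complex.I_sq]
    ring
  have key : numer z + numer (z + π * Complex.I) = (gaussPhase z - 1) * Complex.sinh z := by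
    rw [numer, numer, gaussPhase_add_pi_I, Complex.sinh_add_pi_mul_I, Complex.cosh_add_pi_mul_I, he, h1]
    have h2 : Complex.exp (-z) * Complex.exp z = 1 := by rw [← Complex.exp_add]; simp
    have h3 : Complex.sinh z = (Complex.exp z - Complex.exp (-z)) / 2 := rfl
    have h4 : gaussPhase z * Complex.sinh z
      = gaussPhase z * ((Complex.exp z - Complex.exp (-z)) / 2) := by rw [h3]
    linear_combination (-1 : ℂ) * h4 + (gaussPhase z * Complex.I / 2) * h2
      + (gaussPhase z * Complex.exp (-z) / 2) * Complex.I_sq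
  rw [kern, kern, Complex.sinh_add_pi_mul_I, ← key]
  rw [Odd.neg_pow (by decide)]
  rw [div_neg, sub_neg_eq_add, add_div]

open Filter Topology in
/-- By the difference equation, the limit at `πi` follows from the one at `0`, as
`(gaussPhase z - 1) / sinh² z` has a removable singularity at `0`. -/
lemma exists_tendsto_kern_pi_I : ∃ L, Tendsto kern (𝓝[≠] (π * Complex.I)) (𝓝 L) := by
  obtain ⟨L, hL⟩ := exists_tendsto_kern_zero
  obtain ⟨M, hM⟩ := tendsto_div_sinh_cube (N := fun z => (gaussPhase z - 1) * Complex.sinh z)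
    (N₁ := fun z => Complex.I * z / π * gaussPhase z * Complex.sinh z
      + (gaussPhase z - 1) * Complex.cosh z)
    (fun z => ((hasDerivAt_gaussPhase z).sub_const 1).mul (Complex.hasDerivAt_sinh z))
    (by
      have hl' : HasDerivAt (fun z : ℂ => Complex.I * z / π) (Complex.I / π) 0 := by
        simpa using (((hasDerivAt_id (0:ℂ)).const_mul Complex.I).div_const (π : ℂ))
      refine HasDerivAt.congr_deriv (((hl'.mul (hasDerivAt_gaussPhase 0)).mul (Complex.hasDerivAt_sinh 0)).add
        (((hasDerivAt_gaussPhase 0).sub_const 1).mul (Complex.hasDerivAt_cosh 0))) ?_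
      simp) (by simp) (by simp [gaussPhase])
  refine ⟨L - M, ?_⟩
  have hsh : Tendsto (fun z : ℂ => z - π * Complex.I) (𝓝[≠] (π * Complex.I)) (𝓝[≠] 0) := by
    refine tendsto_nhdsWithin_iff.2 ⟨?_, ?_⟩
    · refine Tendsto.mono_left ?_ nhdsWithin_le_nhds
      have : Continuous fun z : ℂ => z - π * Complex.I := by fun_prop
      simpa using this.tendsto (π * Complex.I)
    · filter_upwards [self_mem_nhdsWithin] with z hz
      simpa [sub_eq_zero] using hz
  refine ((hL.sub hM).comp hsh).congr fun z => ?_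
  have := kern_sub_kern (z - π * Complex.I)
  simp only [Function.comp, ← this]
  simp

lemma sinh_eq_zero_strip {z : ℂ} (h0 : 0 ≤ z.im) (h1 : z.im ≤ π) (h : Complex.sinh z = 0) :
    z = 0 ∨ z = π * Complex.I := by
  obtain ⟨x, y⟩ := z
  simp only at h0 h1
  have hz : Complex.sinh ⟨x, y⟩ = ⟨Real.sinh x * Real.cos y, Real.cosh x * Real.sin y⟩ := by
    rw [Complex.mk_eq_add_mul_I x y, Complex.sinh_add, Complex.cosh_mul_I, Complex.sinh_mul_I,
      ← Complex.ofReal_cos, ← Complex.ofReal_sin, ← Complex.ofReal_cosh, ← Complex.ofReal_sinh]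
    apply Complex.ext <;>
      simp only [Complex.add_re, Complex.add_im, Complex.mul_re, Complex.mul_im,
        Complex.ofReal_re, Complex.ofReal_im, Complex.I_re, Complex.I_im] <;> ring
  rw [hz, Complex.ext_iff] at h
  obtain ⟨hre, him⟩ := h
  simp only [Complex.zero_re, Complex.zero_im, mul_eq_zero, (Real.cosh_pos x).ne', false_or]
    at hre him
  have hcos : Real.cos y ≠ 0 := fun hc => by
    have := Real.sin_sq_add_cos_sq y
    rw [hc, him] at this
    norm_num at this
  have hx : x = 0 := Real.sinh_eq_zero.1 (hre.resolve_right hcos)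
  rcases h0.eq_or_lt with hy | hy
  · left; apply Complex.ext <;> simp [hx, ← hy]
  rcases h1.eq_or_lt with hy' | hy'
  · right; apply Complex.ext <;> simp [hx, hy']
  · exact absurd him (Real.sin_pos_of_pos_of_lt_pi hy hy').ne'

/-! ### Estimates on the vertical sides -/

/-- The limits `∓cothCoeff` of `kern` as `Re z → ±∞` in the strip, with an exponential rate; the
constant is not optimal. -/
lemma norm_kern_add_le {s T : ℝ} (hs : s = 1 ∨ s = -1) (hT : 1 ≤ T) {z : ℂ} (hre : z.re = s * T)
    (h0 : 0 ≤ z.im) (h1 : z.im ≤ π) :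
    ‖kern z + s * cothCoeff‖ ≤ (160 + 4 * ‖cothCoeff‖) * rexp (-T) := by
  have hpi := Real.pi_pos
  have hpi3 := Real.pi_gt_three
  have hee : rexp T * rexp (-T) = 1 := by rw [← Real.exp_add]; simp
  have heT : 2 ≤ rexp T := by have := Real.add_one_le_exp T; linarith
  have hTe : T + 2 ≤ 2 * rexp T := by have := Real.add_one_le_exp T; linarith
  have hem := Real.exp_pos (-T)
  have hem1 : rexp (-T) ≤ 1 / 2 := by nlinarith
  have habsre : |z.re| = T := by
    rcases hs with rfl | rfl <;> simp [hre, abs_of_nonneg (by linarith : (0:ℝ) ≤ T)]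
  have hsz : rexp T / 4 ≤ ‖Complex.sinh z‖ := by
    have e : Complex.sinh z = (Complex.exp z - Complex.exp (-z)) / 2 := rfl
    have := abs_norm_sub_norm_le (Complex.exp z) (Complex.exp (-z))
    rw [e, norm_div, Complex.norm_ofNat]
    rw [Complex.norm_exp, Complex.norm_exp, Complex.neg_re, hre] at this
    rcases hs with rfl | rfl
    · have h2 := (le_abs_self _).trans this
      simp only [one_mul] at h2
      linarith
    · have h2 := (neg_le_abs _).trans this
      simp only [neg_mul, one_mul, neg_neg] at h2
      linarith
  have hcz : ‖Complex.cosh z‖ ≤ rexp T := by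
    have e : Complex.cosh z = (Complex.exp z + Complex.exp (-z)) / 2 := rfl
    have := norm_add_le (Complex.exp z) (Complex.exp (-z))
    rw [e, norm_div, Complex.norm_ofNat]
    rw [Complex.norm_exp, Complex.norm_exp, Complex.neg_re, hre] at this
    rcases hs with rfl | rfl <;> simp only [neg_mul, one_mul, neg_neg] at this <;> linarith
  have hcs : ‖Complex.cosh z - s * Complex.sinh z‖ = rexp (-T) := by
    rcases hs with rfl | rfl
    · simp [Complex.cosh_sub_sinh, Complex.norm_exp, hre]
    · simp [Complex.cosh_add_sinh, Complex.norm_exp, hre]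
  have hgn : ‖gaussPhase z‖ = rexp (-(z.re * z.im / π)) := by
    have : Complex.I * z ^ 2 / (2 * π) = ((1 / (2 * π) : ℝ) : ℂ) * (Complex.I * z ^ 2) := by
      push_cast; ring
    rw [gaussPhase, Complex.norm_exp, this, Complex.re_ofReal_mul]
    congr 1
    simp [pow_two]
    field_simp
    ring
  have hyp : z.im / π ≤ 1 := (div_le_one hpi).2 h1
  have hyp0 : 0 ≤ z.im / π := div_nonneg h0 hpi.le
  have hfe : ‖gaussPhase z * (Complex.exp z - Complex.I) / 2‖ ≤ rexp T := by
    have h2 := norm_sub_le (Complex.exp z) Complex.I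
    rw [Complex.norm_exp, Complex.norm_I] at h2
    rw [norm_div, norm_mul, hgn, Complex.norm_ofNat, mul_div_assoc z.re]
    rcases hs with rfl | rfl
    · have h3 : rexp (-(z.re * (z.im / π))) ≤ 1 := by
        rw [Real.exp_le_one_iff, hre, one_mul]
        have : 0 ≤ T * (z.im / π) := by positivity
        linarith
      rw [hre] at h2
      rw [hre] at h3 ⊢
      simp only [one_mul] at *
      have := mul_le_mul h3 h2 (norm_nonneg _) zero_le_one
      linarith
    · have h3 : rexp (-(z.re * (z.im / π))) ≤ rexp T := by
        rw [Real.exp_le_exp, hre]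
        nlinarith
      have h4 : ‖Complex.exp z - Complex.I‖ ≤ 2 := by
        refine h2.trans ?_
        rw [hre, neg_mul, one_mul]; linarith
      have := mul_le_mul h3 h4 (norm_nonneg _) (Real.exp_pos T).le
      linarith
  have hne : Complex.sinh z ≠ 0 := by
    intro h
    rw [h, norm_zero] at hsz
    linarith
  have hc3 : ‖(1 - Complex.I) / 2 * Complex.cosh z‖ ≤ rexp T := by
    have h2 := norm_sub_le (1 : ℂ) Complex.I
    rw [norm_one, Complex.norm_I] at h2
    rw [norm_mul, norm_div, Complex.norm_ofNat]
    have := mul_le_mul (show ‖1 - Complex.I‖ / 2 ≤ 1 by linarith) hcz (norm_nonneg _) zero_le_one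
    linarith
  have hlin : ‖(1 / 2 + Complex.I * z / π : ℂ)‖ ≤ T + 2 := by
    have h2 := Complex.norm_le_abs_re_add_abs_im z
    rw [habsre, abs_of_nonneg h0] at h2
    have h3 : ‖(Complex.I * z / π : ℂ)‖ ≤ T + 1 := by
      rw [norm_div, norm_mul, Complex.norm_I, one_mul, Complex.norm_real, Real.norm_eq_abs,
        abs_of_pos hpi, div_le_iff₀ hpi]
      nlinarith
    refine (norm_add_le _ _).trans ?_
    norm_num
    norm_num at h3
    linarith
  have hinv : ‖(Complex.sinh z)⁻¹‖ ≤ 4 * rexp (-T) := by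
    rw [norm_inv, Real.exp_neg, ← div_eq_mul_inv]
    rw [inv_le_comm₀ (by positivity) (by positivity), inv_div]
    exact hsz
  have hdec : kern z + s * cothCoeff =
      (gaussPhase z * (Complex.exp z - Complex.I) / 2 - (1 - Complex.I) / 2 * Complex.cosh z)
          * (Complex.sinh z)⁻¹ ^ 3
        - (1 / 2 + Complex.I * z / π) * (Complex.sinh z)⁻¹ ^ 2
        - cothCoeff * ((Complex.cosh z - s * Complex.sinh z) * (Complex.sinh z)⁻¹) := by
    rw [kern, numer]
    generalize (1 / 2 + Complex.I * z / π : ℂ) = l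
    generalize gaussPhase z * (Complex.exp z - Complex.I) / 2 = g
    generalize (1 - Complex.I) / 2 * Complex.cosh z = c
    field_simp
    ring
  rw [hdec]
  set q := rexp (-T)
  set p := rexp T
  have hA : ‖(gaussPhase z * (Complex.exp z - Complex.I) / 2
      - (1 - Complex.I) / 2 * Complex.cosh z) * (Complex.sinh z)⁻¹ ^ 3‖ ≤ 128 * q ^ 2 := by
    rw [norm_mul, norm_pow]
    calc _ ≤ (p + p) * (4 * q) ^ 3 := by
          gcongr
          exact (norm_sub_le _ _).trans (add_le_add hfe hc3)
      _ = 128 * q ^ 2 * (p * q) := by ring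
      _ = _ := by rw [hee, mul_one]
  have hB : ‖(1 / 2 + Complex.I * z / π) * (Complex.sinh z)⁻¹ ^ 2‖ ≤ 32 * q := by
    rw [norm_mul, norm_pow]
    calc _ ≤ (2 * p) * (4 * q) ^ 2 := by
          gcongr
          exact hlin.trans hTe
      _ = 32 * q * (p * q) := by ring
      _ = _ := by rw [hee, mul_one]
  have hC : ‖cothCoeff * ((Complex.cosh z - s * Complex.sinh z) * (Complex.sinh z)⁻¹)‖
      ≤ ‖cothCoeff‖ * (q * (4 * q)) := by
    rw [norm_mul, norm_mul, hcs]
    gcongr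
  have hq : q ^ 2 ≤ q := by nlinarith
  have hn := norm_nonneg cothCoeff
  have hCq : ‖cothCoeff‖ * (q * (4 * q)) ≤ 4 * ‖cothCoeff‖ * q := by nlinarith
  refine (norm_sub_le _ _).trans ?_
  refine (add_le_add_left (norm_sub_le _ _) _).trans ?_
  linarith

/-! ### The contour integral -/

lemma differentiable_numer : Differentiable ℂ numer := by
  have hg : Differentiable ℂ gaussPhase := fun z => (hasDerivAt_gaussPhase z).differentiableAt
  unfold numer
  fun_prop

lemma differentiableAt_kern {z : ℂ} (hz : Complex.sinh z ≠ 0) : DifferentiableAt ℂ kern z :=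
  (differentiable_numer z).div (Complex.differentiable_sinh.pow 3 z) (pow_ne_zero 3 hz)

/-- `kern` extends to a function `F` that is continuous on the closed strip, and differentiable
there off `0` and `πi`. -/
lemma exists_extension : ∃ F : ℂ → ℂ, (∀ z, z ≠ 0 → z ≠ π * Complex.I → F z = kern z) ∧
    ∀ z : ℂ, 0 ≤ z.im → z.im ≤ π → ContinuousAt F z ∧
      (z ≠ 0 → z ≠ π * Complex.I → DifferentiableAt ℂ F z) := by
  obtain ⟨L, hL⟩ := exists_tendsto_kern_zero
  obtain ⟨M, hM⟩ := exists_tendsto_kern_pi_I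
  have hpI : (π * Complex.I : ℂ) ≠ 0 := by simp [Real.pi_ne_zero]
  have hdiff : ∀ z : ℂ, 0 ≤ z.im → z.im ≤ π → z ≠ 0 → z ≠ π * Complex.I →
      DifferentiableAt ℂ (Function.update (Function.update kern 0 L) (π * Complex.I) M) z := by
    intro z h0 h1 hz hz'
    refine (differentiableAt_kern (z := z) fun h => ?_).congr_of_eventuallyEq ?_
    · rcases sinh_eq_zero_strip h0 h1 h with h | h <;> contradiction
    · filter_upwards [isOpen_ne.mem_nhds hz, isOpen_ne.mem_nhds hz'] with w hw hw'
      rw [Function.update_of_ne hw', Function.update_of_ne hw]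
  refine ⟨Function.update (Function.update kern 0 L) (π * Complex.I) M, ?_, ?_⟩
  · intro z hz hz'
    rw [Function.update_of_ne hz', Function.update_of_ne hz]
  · intro z h0 h1
    refine ⟨?_, hdiff z h0 h1⟩
    by_cases hz : z = 0
    · subst hz
      rw [continuousAt_update_of_ne hpI.symm, continuousAt_update_same]
      exact hL
    by_cases hz' : z = π * Complex.I
    · subst hz'
      rw [continuousAt_update_same]
      refine hM.congr' ?_
      filter_upwards [nhdsWithin_le_nhds (isOpen_ne.mem_nhds hpI)] with w hw
      rw [Function.update_of_ne hw]
    · exact (hdiff z h0 h1 hz hz').continuousAt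

/-- The real integrand after the substitution `x = 2a`. At `x = 0` its value is `0` by the convention
`0 / 0 = 0`, which does not affect the integral. -/
noncomputable def realKern (x : ℝ) : ℝ := Real.sin (x ^ 2 / (2 * π)) / Real.sinh x ^ 2

lemma im_kern_sub (x : ℝ) (hx : x ≠ 0) :
    (kern x - kern (x + π * Complex.I)).im = realKern x := by
  have hs : Complex.sinh x ≠ 0 := by
    rw [← Complex.ofReal_sinh]
    exact_mod_cast Real.sinh_ne_zero.2 hx
  have h1 : (gaussPhase x - 1) * Complex.sinh x / Complex.sinh x ^ 3 =
      (gaussPhase x - 1) / ((Real.sinh x ^ 2 : ℝ) : ℂ) := by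
    push_cast
    field_simp
  have h2 : gaussPhase x = Complex.exp ((x ^ 2 / (2 * π) : ℝ) * Complex.I) := by
    rw [gaussPhase]; congr 1; push_cast; ring
  rw [kern_sub_kern, h1, Complex.div_ofReal_im, Complex.sub_im, h2, Complex.exp_ofReal_mul_I_im]
  simp [realKern]

/-- Cauchy's theorem on the rectangle `[-T, T] × [0, π]`. -/
lemma abs_realKern_integral_sub_le {T : ℝ} (hT : 1 ≤ T) :
    |(∫ x in (-T)..T, realKern x) - 1 / 2| ≤
      2 * π * ((160 + 4 * ‖cothCoeff‖) * rexp (-T)) := by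
  obtain ⟨F, hF, hF'⟩ := exists_extension
  have hpi := Real.pi_pos
  set K := (160 + 4 * ‖cothCoeff‖) * rexp (-T) with hK
  have hrect := Complex.integral_boundary_rect_eq_zero_of_differentiable_on_off_countable F
    ((-T : ℝ) : ℂ) ((T : ℝ) + π * Complex.I) ∅ countable_empty
    (by
      intro z hz
      rw [Complex.mem_reProdIm] at hz
      have h2 := hz.2
      simp [uIcc_of_le hpi.le] at h2
      exact (hF' z h2.1 h2.2).1.continuousWithinAt)
    (by
      intro z hz
      rw [sdiff_empty, Complex.mem_reProdIm] at hz
      have h2 := hz.2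
      simp [hpi.le] at h2
      refine (hF' z h2.1.le h2.2.le).2 ?_ ?_
      · rintro rfl; simp at h2
      · rintro rfl; simp at h2)
  simp only [Complex.ofReal_im, Complex.ofReal_re, Complex.add_re, Complex.add_im, Complex.mul_re,
    Complex.mul_im, Complex.I_re, Complex.I_im, mul_zero, mul_one, zero_add, add_zero,
    Complex.ofReal_zero, zero_mul, sub_self, smul_eq_mul] at hrect
  -- each vertical side contributes `-s * π * cothCoeff` up to an error `K * π`
  have hside : ∀ s : ℝ, (s = 1 ∨ s = -1) →
      ‖(∫ y in (0:ℝ)..π, F ((s * T : ℝ) + y * Complex.I)) + π * (s * cothCoeff)‖ ≤ K * π := by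
    intro s hs
    have hint : IntervalIntegrable (fun y : ℝ => F ((s * T : ℝ) + y * Complex.I)) volume 0 π := by
      refine ContinuousOn.intervalIntegrable fun y hy => ContinuousAt.continuousWithinAt ?_
      rw [uIcc_of_le hpi.le] at hy
      refine ContinuousAt.comp (f := fun y : ℝ => ((s * T : ℝ) : ℂ) + y * Complex.I) (g := F)
        (hF' _ ?_ ?_).1 (by fun_prop)
      · simpa using hy.1
      · simpa using hy.2
    have e : (∫ y in (0:ℝ)..π, F ((s * T : ℝ) + y * Complex.I)) + π * (s * cothCoeff)
        = ∫ y in (0:ℝ)..π, (F ((s * T : ℝ) + y * Complex.I) + s * cothCoeff) := by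
      rw [intervalIntegral.integral_add hint (by simp), intervalIntegral.integral_const]
      simp
    rw [e]
    have := intervalIntegral.norm_integral_le_of_norm_le_const (a := 0) (b := π) (C := K)
      (f := fun y : ℝ => F ((s * T : ℝ) + y * Complex.I) + s * cothCoeff) ?_
    · simpa [abs_of_pos hpi] using this
    intro y hy
    rw [uIoc_of_le hpi.le] at hy
    have hre : ((s * T : ℝ) + y * Complex.I : ℂ).re = s * T := by simp
    have him : ((s * T : ℝ) + y * Complex.I : ℂ).im = y := by simp
    have hsT : s * T ≠ 0 := by
      have : T ≠ 0 := by linarith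
      rcases hs with rfl | rfl <;> simpa
    rw [hF]
    · exact norm_kern_add_le hs hT hre (by rw [him]; exact hy.1.le) (by rw [him]; exact hy.2)
    · intro h; rw [h] at hre; exact hsT (by simpa using hre.symm)
    · intro h; rw [h] at hre; exact hsT (by simpa using hre.symm)
  have hR := hside 1 (Or.inl rfl)
  have hL := hside (-1) (Or.inr rfl)
  rw [neg_one_mul] at hL
  simp only [one_mul, Complex.ofReal_one] at hR
  rw [show ((-1 : ℝ) : ℂ) * cothCoeff = -cothCoeff by simp] at hL
  have hi1 : IntervalIntegrable (fun x : ℝ => F x) volume (-T) T := by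
    refine ContinuousOn.intervalIntegrable fun y hy => ContinuousAt.continuousWithinAt ?_
    exact ContinuousAt.comp (f := fun y : ℝ => (y : ℂ)) (g := F)
      (hF' _ (by simp) (by simpa using hpi.le)).1 (by fun_prop)
  have hi2 : IntervalIntegrable (fun x : ℝ => F (x + π * Complex.I)) volume (-T) T := by
    refine ContinuousOn.intervalIntegrable fun y hy => ContinuousAt.continuousWithinAt ?_
    exact ContinuousAt.comp (f := fun y : ℝ => (y : ℂ) + π * Complex.I) (g := F)
      (hF' _ (by simpa using hpi.le) (by simp)).1 (by fun_prop)
  have him : ∫ x in (-T)..T, realKern x =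
      (∫ x : ℝ in (-T)..T, (F x - F (x + π * Complex.I))).im := by
    have := Complex.imCLM.intervalIntegral_comp_comm (hi1.sub hi2)
    simp only [Complex.imCLM_apply] at this
    rw [← this]
    refine intervalIntegral.integral_congr_ae ?_
    have h0 : ∀ᵐ x : ℝ, x ≠ 0 := by simp [ae_iff]
    filter_upwards [h0] with x hx _
    rw [← im_kern_sub x hx, hF, hF]
    · intro h; apply hx; simpa using congrArg Complex.re h
    · intro h; apply hx; simpa using congrArg Complex.re h
    · exact_mod_cast hx
    · intro h; apply hx; simpa using congrArg Complex.re h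
  have hval : (2 * π * Complex.I * cothCoeff).im = 1 / 2 := by
    have : 2 * π * Complex.I * cothCoeff
        = ((1 / 2 : ℝ) : ℂ) * Complex.I + (((3 / 2 - π / 2 : ℝ)) : ℂ) := by
      have hpi' : (π : ℂ) ≠ 0 := by exact_mod_cast pi_ne_zero
      rw [cothCoeff]
      push_cast
      field_simp
      ring_nf
      simp only [Complex.I_sq]
      ring
    rw [this]
    simp
  rw [him, ← hval, ← Complex.sub_im]
  refine (Complex.abs_im_le_norm _).trans ?_
  rw [intervalIntegral.integral_sub hi1 hi2]
  have e : (∫ x : ℝ in (-T)..T, F x) - (∫ x : ℝ in (-T)..T, F (x + π * Complex.I))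
      - 2 * π * Complex.I * cothCoeff =
      Complex.I * ((∫ y in (0:ℝ)..π, F (((-T : ℝ) : ℂ) + y * Complex.I)) + π * (-cothCoeff))
      - Complex.I * ((∫ y in (0:ℝ)..π, F ((T : ℂ) + y * Complex.I)) + π * cothCoeff) := by
    linear_combination hrect
  rw [e]
  refine (norm_sub_le _ _).trans ?_
  rw [norm_mul, norm_mul, Complex.norm_I, one_mul, one_mul]
  linarith

/-! ### Integrability and conclusion -/

/-- The bound comes from `|sin t| ≤ |t|` and `sinh x = 2 sinh (x/2) cosh (x/2) ≥ x e^{x/2}/2` for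
`x ≥ 0`. -/
lemma abs_realKern_le (x : ℝ) : |realKern x| ≤ 8 / π * rexp (-|x|) := by
  have hpi := Real.pi_pos
  by_cases hx : x = 0
  · subst hx
    simp [realKern]
    positivity
  have h1 : |Real.sin (x ^ 2 / (2 * π))| ≤ x ^ 2 / (2 * π) :=
    Real.abs_sin_le_abs.trans_eq (abs_of_nonneg (by positivity))
  have hy : 0 < |x| / 2 := by positivity
  have h2 : |x| * Real.cosh (|x| / 2) ≤ Real.sinh |x| := by
    have e : Real.sinh |x| = 2 * Real.sinh (|x| / 2) * Real.cosh (|x| / 2) := by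
      rw [← Real.sinh_two_mul]; congr 1; ring
    rw [e]
    have := Real.self_le_sinh_iff.2 hy.le
    have := Real.cosh_pos (|x| / 2)
    nlinarith
  have h3 : rexp (|x| / 2) / 2 ≤ Real.cosh (|x| / 2) := by
    rw [Real.cosh_eq]
    have := Real.exp_pos (-(|x| / 2))
    linarith
  have h4 : x ^ 2 * rexp |x| / 4 ≤ Real.sinh x ^ 2 := by
    have e1 : Real.sinh x ^ 2 = Real.sinh |x| ^ 2 := by rw [← Real.abs_sinh, sq_abs]
    have e2 : x ^ 2 * rexp |x| / 4 = (|x| * (rexp (|x| / 2) / 2)) ^ 2 := by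
      rw [mul_pow, div_pow, sq_abs, ← Real.exp_nat_mul]
      have : ((2 : ℕ) : ℝ) * (|x| / 2) = |x| := by push_cast; ring
      rw [this]; ring
    rw [e1, e2]
    refine pow_le_pow_left₀ (by positivity) (le_trans ?_ h2) 2
    gcongr
  have hs : 0 < Real.sinh x ^ 2 := by
    have := Real.sinh_ne_zero.2 hx
    positivity
  rw [realKern, abs_div, abs_of_pos hs, div_le_iff₀ hs]
  refine h1.trans ?_
  have hx2 : 0 < x ^ 2 := by positivity
  calc x ^ 2 / (2 * π) ≤ 8 / π * rexp (-|x|) * (x ^ 2 * rexp |x| / 4) := by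
        have : rexp (-|x|) * rexp |x| = 1 := by rw [← Real.exp_add]; simp
        have e : 8 / π * rexp (-|x|) * (x ^ 2 * rexp |x| / 4)
          = 2 / π * x ^ 2 * (rexp (-|x|) * rexp |x|) := by ring
        rw [e, this, mul_one, div_le_iff₀ (by positivity)]
        field_simp
        nlinarith
    _ ≤ _ := by gcongr

lemma integrable_exp_neg_abs_real : Integrable fun x : ℝ => rexp (-|x|) := by
  rw [← integrableOn_univ, ← Iic_union_Ioi (a := (0 : ℝ)), integrableOn_union]
  constructor
  · refine (integrableOn_exp_Iic 0).congr_fun (fun x hx => ?_) measurableSet_Iic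
    simp [abs_of_nonpos (mem_Iic.1 hx)]
  · refine (integrableOn_exp_neg_Ioi 0).congr_fun (fun x hx => ?_) measurableSet_Ioi
    simp [abs_of_pos (mem_Ioi.1 hx)]

lemma integrable_realKern : Integrable realKern := by
  have hI : Integrable fun x : ℝ => 8 / π * rexp (-|x|) :=
    integrable_exp_neg_abs_real.const_mul _
  refine hI.mono' ?_ (Filter.Eventually.of_forall fun x => ?_)
  · apply Measurable.aestronglyMeasurable
    unfold realKern
    fun_prop
  · exact abs_realKern_le x

open Filter Topology in
lemma integral_realKern : ∫ x, realKern x = 1 / 2 := by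
  have h1 := intervalIntegral_tendsto_integral integrable_realKern tendsto_neg_atTop_atBot
    tendsto_id
  refine tendsto_nhds_unique h1 ?_
  rw [tendsto_iff_dist_tendsto_zero]
  have h2 : Tendsto (fun T : ℝ => 2 * π * ((160 + 4 * ‖cothCoeff‖) * rexp (-T))) atTop (𝓝 0) := by
    have := ((Real.tendsto_exp_neg_atTop_nhds_zero).const_mul
      (160 + 4 * ‖cothCoeff‖)).const_mul (2 * π)
    simpa using this
  refine squeeze_zero' (Eventually.of_forall fun _ => dist_nonneg) ?_ h2
  filter_upwards [eventually_ge_atTop 1] with T hT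
  rw [Real.dist_eq]
  exact abs_realKern_integral_sub_le hT

theorem stmt_2 :
    ∫ a in Set.Ioi (0:ℝ), Real.sin ((2 / π) * a ^ 2) / (Real.sinh (2 * a)) ^ 2 = 1 / 8 := by
  have h1 : ∀ a : ℝ, Real.sin ((2 / π) * a ^ 2) / (Real.sinh (2 * a)) ^ 2 = realKern (2 * a) := by
    intro a
    rw [realKern]
    congr 2
    field_simp
  have habs : ∀ x : ℝ, realKern |x| = realKern x := by
    intro x
    rw [realKern, realKern, sq_abs, ← Real.abs_sinh, sq_abs]
  have h2 := integral_comp_abs (f := realKern)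
  simp only [habs, integral_realKern] at h2
  simp only [h1]
  rw [integral_comp_mul_left_Ioi realKern 0 two_pos, mul_zero, smul_eq_mul]
  linarith
end

section
/- The integral over a from 0 to ∞ of sin((4/π) a²) / (sinh(4a) · sinh(2a)) equals (π/16) · (√2 − 1). -/
open Real MeasureTheory Set

/-!
With `a = π x / 2` the claim becomes `∫₀^∞ h = (√2 - 1) / 8`, where
`h x = sin (π x²) / (sinh (π x) sinh (2 π x))` is the imaginary part on the real line of
`f z = (exp (i π z²) - 1) / (sinh (π z) sinh (2 π z))`.

Write `s, c` for `sinh (π z), cosh (π z)` and `E z = exp (i π z²)`. Since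
`E (z + i) = -exp (-2 π z) E z` while `s` and `c` change sign under `z ↦ z + i`, the function
`E / (4 s³) + (E - 1) / (4 s² c)` is a solution of the difference equation `F z - F (z + i) = f z`
(`F_sub`). Adding to it the `i`-periodic function `-c / (4 s³) + κ c / s + μ s / c` preserves the
equation, and the constants `κ, μ` can be chosen so that the singularities `0`, `i / 2`, `i` of `F`
in the strip `0 ≤ Im z ≤ 1` become removable (`F_lim_zero`, `F_lim_half`, `F_lim_I`). Let `g` be the
holomorphic extension of `F`. Cauchy's theorem for `g` on the rectangle `[-T, T] × [0, 1]` expresses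
`∫ f` over `[-T, T]` by the integrals of `g` over the vertical sides (`integral_eq_sides`). As
`Re z → ±∞` in the strip, `F z → ±(κ + μ)` uniformly (`F_sub_le`), hence `∫ f = -2 i (κ + μ)` over
the real line, and the imaginary part of this is `-2 Re (κ + μ) = (√2 - 1) / 4`.
-/

namespace SinhIntegral

open Filter Topology Complex

/-- Riemann's removable singularity theorem, with the values of the extension given by `limUnder` at
every point, so that several singularities are filled in at once. -/
lemma limUnder_differentiableAt {F : ℂ → ℂ} {p : ℂ}
    (hd : ∀ᶠ z in 𝓝[≠] p, DifferentiableAt ℂ F z)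
    (h0 : Tendsto (fun z => (z - p) * F z) (𝓝[≠] p) (𝓝 0)) :
    DifferentiableAt ℂ (fun z => limUnder (𝓝[≠] z) F) p := by
  obtain ⟨U, hU, hUF⟩ := (eventually_nhdsWithin_iff.1 hd).exists_mem
  obtain ⟨V, hVU, hVo, hpV⟩ := mem_nhds_iff.1 hU
  have hV : V ∈ 𝓝 p := hVo.mem_nhds hpV
  have key := Complex.differentiableOn_update_limUnder_of_isLittleO (f := F) hV
    (fun z hz => (hUF z (hVU hz.1) hz.2).differentiableWithinAt) (by
      rw [Asymptotics.isLittleO_iff_tendsto']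
      · have h1 : Tendsto (fun z => (z - p) * F z - (z - p) * F p) (𝓝[≠] p) (𝓝 (0 - (p - p) * F p)) :=
          h0.sub (((tendsto_id.sub_const p).mul_const (F p)).mono_left nhdsWithin_le_nhds)
        simp only [sub_self, zero_mul] at h1
        refine h1.congr fun z => ?_
        rw [div_inv_eq_mul]; ring
      · filter_upwards [self_mem_nhdsWithin] with z hz h
        exact absurd (inv_eq_zero.1 h) (sub_ne_zero.2 hz))
  refine (key.differentiableAt hV).congr_of_eventuallyEq ?_
  filter_upwards [hV] with z hz
  rcases eq_or_ne z p with rfl | hzp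
  · simp
  · rw [Function.update_of_ne hzp]
    exact ((hUF z (hVU hz) hzp).continuousAt.tendsto.mono_left nhdsWithin_le_nhds).limUnder_eq

noncomputable section

/-! ### The functions and the difference equation -/

/-- `sinh (π z)`. -/
def sh (z : ℂ) : ℂ := Complex.sinh (π * z)

/-- `cosh (π z)`. -/
def ch (z : ℂ) : ℂ := Complex.cosh (π * z)

/-- The complex Gaussian `exp (i π z²)`. -/
def E (z : ℂ) : ℂ := Complex.exp (I * π * z ^ 2)

/-- The coefficient of `coth (π z)` cancelling the pole at `0`. -/
def κ : ℂ := 1 / 8 - I / (4 * π)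

/-- The coefficient of `tanh (π z)` cancelling the pole at `i / 2`. -/
def μ : ℂ := -I * (E (I / 2) - 1) / 4

/-- The part of `F` that decays at both ends of the strip `0 ≤ Im z ≤ 1`. -/
def A (z : ℂ) : ℂ :=
  E z / (4 * sh z ^ 3) + (E z - 1) / (4 * sh z ^ 2 * ch z) - ch z / (4 * sh z ^ 3)

/-- A solution of `F z - F (z + i) = f z` all of whose singularities in the closed strip
`0 ≤ Im z ≤ 1` are removable. -/
def F (z : ℂ) : ℂ := A z + κ * (ch z / sh z) + μ * (sh z / ch z)

/-- The integrand `(exp (i π z²) - 1) / (sinh (π z) sinh (2 π z))`, with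
`sinh (2 π z)` expanded. -/
def f (z : ℂ) : ℂ := (E z - 1) / (2 * sh z ^ 2 * ch z)

/-- `F` with its removable singularities filled in. -/
def g (z : ℂ) : ℂ := limUnder (𝓝[≠] z) F

lemma sh_hasDerivAt (z : ℂ) : HasDerivAt sh (π * ch z) z := by
  unfold sh ch
  have := ((hasDerivAt_id z).const_mul (π : ℂ)).csinh
  simpa [mul_comm] using this

lemma ch_hasDerivAt (z : ℂ) : HasDerivAt ch (π * sh z) z := by
  unfold sh ch
  have := ((hasDerivAt_id z).const_mul (π : ℂ)).ccosh
  simpa [mul_comm] using this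

lemma sh_diff : Differentiable ℂ sh := fun z => (sh_hasDerivAt z).differentiableAt
lemma ch_diff : Differentiable ℂ ch := fun z => (ch_hasDerivAt z).differentiableAt
lemma E_diff : Differentiable ℂ E := by unfold E; fun_prop

lemma ch_sq (z : ℂ) : ch z ^ 2 = sh z ^ 2 + 1 := Complex.cosh_sq _

lemma sh_add_I (z : ℂ) : sh (z + I) = -sh z := by
  rw [sh, mul_add, Complex.sinh_add_pi_mul_I, sh]

lemma ch_add_I (z : ℂ) : ch (z + I) = -ch z := by
  rw [ch, mul_add, Complex.cosh_antiperiodic, ch]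

lemma E_add_I (z : ℂ) : E (z + I) = -E z * (ch z - sh z) ^ 2 := by
  rw [ch, sh, Complex.cosh_sub_sinh, E, E, ← Complex.exp_nat_mul, neg_mul, ← Complex.exp_add,
    ← neg_one_mul, ← Complex.exp_pi_mul_I, ← Complex.exp_add, Complex.exp_eq_exp_iff_exists_int]
  refine ⟨-1, ?_⟩
  push_cast
  linear_combination (2 * π * z + π * I) * Complex.I_sq

lemma F_sub (z : ℂ) (hs : sh z ≠ 0) (hc : ch z ≠ 0) : F z - F (z + I) = f z := by
  have h := ch_sq z
  simp only [F, A, f, sh_add_I, ch_add_I, E_add_I]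
  field_simp
  linear_combination (-2 * E z * (ch z - sh z)) * h

lemma F_differentiableAt {z : ℂ} (hs : sh z ≠ 0) (hc : ch z ≠ 0) : DifferentiableAt ℂ F z := by
  have h1 := sh_diff z
  have h2 := ch_diff z
  have h3 := E_diff z
  unfold F A
  fun_prop (disch := simp [hs, hc])

/-- The zeros of `sh` and `ch` are isolated, because the derivative of their product does not vanish
at them. -/
lemma eventually_ne (p : ℂ) : ∀ᶠ z in 𝓝[≠] p, sh z ≠ 0 ∧ ch z ≠ 0 := by
  have h : HasDerivAt (fun z => sh z * ch z) (π * ch p * ch p + sh p * (π * sh p)) p :=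
    (sh_hasDerivAt p).mul (ch_hasDerivAt p)
  by_cases h0 : sh p * ch p = 0
  · have := h.eventually_ne (c := 0) (by
      have h2 := ch_sq p
      have : (π : ℂ) ≠ 0 := by exact_mod_cast Real.pi_ne_zero
      rcases mul_eq_zero.1 h0 with h1 | h1
      · have : ch p ≠ 0 := by rintro h3; simp [h1, h3] at h2
        simp [*]
      · have : sh p ≠ 0 := by rintro h3; simp [h1, h3] at h2
        simp [*])
    filter_upwards [this] with z hz using mul_ne_zero_iff.1 hz
  · have := (h.continuousAt.eventually_ne h0).filter_mono (nhdsWithin_le_nhds (s := {p}ᶜ))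
    filter_upwards [this] with z hz using mul_ne_zero_iff.1 hz

lemma sh_eq_zero {z : ℂ} (h : sh z = 0) : ∃ k : ℤ, z = k * I := by
  have : Complex.sin (π * z * I) = 0 := by rw [Complex.sin_mul_I, ← sh, h, zero_mul]
  obtain ⟨k, hk⟩ := Complex.sin_eq_zero_iff.1 this
  have hpi : (π : ℂ) ≠ 0 := by exact_mod_cast Real.pi_ne_zero
  refine ⟨-k, mul_left_cancel₀ hpi ?_⟩
  push_cast
  linear_combination (-I) * hk + π * z * Complex.I_sq

lemma ch_eq_zero {z : ℂ} (h : ch z = 0) : ∃ k : ℤ, z = (k + 1 / 2) * I := by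
  have : Complex.cos (π * z * I) = 0 := by rw [Complex.cos_mul_I, ← ch, h]
  obtain ⟨k, hk⟩ := Complex.cos_eq_zero_iff.1 this
  have hpi : (π : ℂ) ≠ 0 := by exact_mod_cast Real.pi_ne_zero
  refine ⟨-k - 1, mul_left_cancel₀ hpi ?_⟩
  push_cast
  linear_combination (-I) * hk + π * z * Complex.I_sq

/-! ### Removing the singularities in the strip -/

/-- First-order factorization of a differentiable function at a point. -/
lemma exists_factor {h : ℂ → ℂ} {h' p : ℂ} (hh : HasDerivAt h h' p) :
    ∃ ψ : ℂ → ℂ, ContinuousAt ψ p ∧ ψ p = h' ∧ ∀ z, h z = h p + (z - p) * ψ z := by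
  refine ⟨dslope h p, continuousAt_dslope_same.2 hh.differentiableAt, ?_, fun z => ?_⟩
  · rw [dslope_same, hh.deriv]
  · have := sub_smul_dslope h p z
    rw [smul_eq_mul] at this
    rw [this]; ring

lemma sh_zero : sh 0 = 0 := by simp [sh]
lemma ch_zero : ch 0 = 1 := by simp [ch]
lemma pi_ne : (π : ℂ) ≠ 0 := by exact_mod_cast Real.pi_ne_zero

lemma exists_sh : ∃ ψ : ℂ → ℂ, ContinuousAt ψ 0 ∧ ψ 0 = π ∧ ∀ z, sh z = z * ψ z := by
  simpa [sh_zero, ch_zero] using exists_factor (sh_hasDerivAt 0)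

/-- Second-order expansion of `E` at `0`, obtained from that of `exp` at first order. -/
lemma exists_E : ∃ φ : ℂ → ℂ, ContinuousAt φ 0 ∧ φ 0 = I * π ∧ ∀ z, E z = 1 + z ^ 2 * φ z := by
  obtain ⟨φ, h1, h2, h3⟩ := exists_factor (Complex.hasDerivAt_exp 0)
  refine ⟨fun z => I * π * φ (I * π * z ^ 2), ?_, by simp [h2], fun z => ?_⟩
  · refine continuousAt_const.mul (ContinuousAt.comp (f := fun z : ℂ => I * π * z ^ 2) ?_ ?_)
    · simpa using h1
    · fun_prop
  · rw [E, h3, Complex.exp_zero]; ring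

/-- The singularity at `0` is removable. The term `(1 - c) / (4 s³)` is rewritten as
`-1 / (4 s (1 + c))`, which exhibits its pole as simple; the residues then cancel by the choice of `κ`. -/
lemma F_lim_zero : Tendsto (fun z => (z - 0) * F z) (𝓝[≠] 0) (𝓝 0) := by
  obtain ⟨ψ, hψc, hψ0, hsψ⟩ := exists_sh
  obtain ⟨φ, hφc, hφ0, hEφ⟩ := exists_E
  have hpi := pi_ne
  have hch0 := ch_zero
  have hcc := (ch_diff 0).continuousAt
  have hsc := (sh_diff 0).continuousAt
  have hlim : ContinuousAt (fun z : ℂ => φ z / (4 * ψ z ^ 3)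
      - 1 / (4 * ψ z * (1 + ch z)) + z * (φ z) / (4 * ψ z ^ 2 * ch z)
      + κ * (ch z / ψ z) + z * μ * (sh z / ch z)) 0 := by
    have e1 : 4 * ψ 0 ^ 3 ≠ 0 := by simp [hψ0, hpi]
    have e2 : 4 * ψ 0 * (1 + ch 0) ≠ 0 := by rw [hψ0, hch0]; norm_num [hpi]
    have e3 : 4 * ψ 0 ^ 2 * ch 0 ≠ 0 := by simp [hψ0, hch0, hpi]
    have e4 : ψ 0 ≠ 0 := by simp [hψ0, hpi]
    have e5 : ch 0 ≠ 0 := by simp [hch0]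
    fun_prop (disch := assumption)
  have hlim' := hlim.tendsto.mono_left (nhdsWithin_le_nhds (s := {0}ᶜ))
  have hval : φ 0 / (4 * ψ 0 ^ 3)
      - 1 / (4 * ψ 0 * (1 + ch 0)) + 0 * (φ 0) / (4 * ψ 0 ^ 2 * ch 0)
      + κ * (ch 0 / ψ 0) + 0 * μ * (sh 0 / ch 0) = 0 := by
    simp only [hφ0, hψ0, hch0, κ]
    field_simp
    ring
  rw [hval] at hlim'
  refine hlim'.congr' ?_
  have h1 : ∀ᶠ z in 𝓝[≠] (0 : ℂ), 1 + ch z ≠ 0 := by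
    refine ContinuousAt.eventually_ne (by fun_prop) ?_ |>.filter_mono nhdsWithin_le_nhds
    rw [hch0]; norm_num
  filter_upwards [eventually_ne 0, h1, self_mem_nhdsWithin] with z ⟨hs, hc⟩ h1 hz
  have hz : z ≠ 0 := hz
  have hψz : ψ z ≠ 0 := by rintro h; exact hs (by rw [hsψ, h, mul_zero])
  have hone : 1 / (4 * ψ z * (1 + ch z)) = z * (ch z - 1) / (4 * sh z ^ 3) := by
    rw [div_eq_div_iff (by simp [*]) (by simp [*])]
    have h2 := ch_sq z
    have h3 := hsψ z
    linear_combination (-4 * sh z ^ 2 * 1) * h3.symm - 4 * z * ψ z * h2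
  rw [hone, F, A, hEφ, hsψ]
  field_simp
  ring

/-- The singularity at `i / 2` is at most a simple pole, and its residue vanishes by the choice of `μ`. -/
lemma F_lim_half : Tendsto (fun z => (z - I / 2) * F z) (𝓝[≠] (I / 2)) (𝓝 0) := by
  have hpi := pi_ne
  have harg : (π : ℂ) * (I / 2) = (π / 2 : ℂ) * I := by ring
  have hsh0 : sh (I / 2) = I := by
    rw [sh, harg, Complex.sinh_mul_I, Complex.sin_pi_div_two, one_mul]
  have hch0 : ch (I / 2) = 0 := by
    rw [ch, harg, Complex.cosh_mul_I, Complex.cos_pi_div_two]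
  obtain ⟨ψ, hψc, hψ0, hcψ⟩ := exists_factor (ch_hasDerivAt (I / 2))
  rw [hsh0] at hψ0
  simp only [hch0, zero_add] at hcψ
  have hcc := (ch_diff (I / 2)).continuousAt
  have hsc := (sh_diff (I / 2)).continuousAt
  have hec := (E_diff (I / 2)).continuousAt
  have hlim : ContinuousAt (fun z : ℂ => (z - I / 2) * (E z / (4 * sh z ^ 3) - ch z / (4 * sh z ^ 3)
      + κ * (ch z / sh z)) + (E z - 1) / (4 * sh z ^ 2 * ψ z) + μ * (sh z / ψ z)) (I / 2) := by
    have e1 : 4 * sh (I / 2) ^ 3 ≠ 0 := by simp [hsh0]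
    have e3 : 4 * sh (I / 2) ^ 2 * ψ (I / 2) ≠ 0 := by simp [hψ0, hsh0, hpi]
    have e4 : ψ (I / 2) ≠ 0 := by simp [hψ0, hpi]
    have e5 : sh (I / 2) ≠ 0 := by simp [hsh0]
    fun_prop (disch := assumption)
  have hlim' := hlim.tendsto.mono_left (nhdsWithin_le_nhds (s := {I / 2}ᶜ))
  have hval : (I / 2 - I / 2) * (E (I / 2) / (4 * sh (I / 2) ^ 3) - ch (I / 2) / (4 * sh (I / 2) ^ 3)
      + κ * (ch (I / 2) / sh (I / 2))) + (E (I / 2) - 1) / (4 * sh (I / 2) ^ 2 * ψ (I / 2))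
      + μ * (sh (I / 2) / ψ (I / 2)) = 0 := by
    simp only [hψ0, hch0, hsh0, μ]
    field_simp
    linear_combination (-2 * (E (I / 2) - 1) * (I ^ 2 - 1)) * Complex.I_sq
  rw [hval] at hlim'
  refine hlim'.congr' ?_
  filter_upwards [eventually_ne (I / 2), self_mem_nhdsWithin] with z ⟨hs, hc⟩ hz
  have hz : z - I / 2 ≠ 0 := sub_ne_zero.2 hz
  have hψz : ψ z ≠ 0 := by rintro h; exact hc (by rw [hcψ, h, mul_zero])
  rw [F, A]
  have e1 : (E z - 1) / (4 * sh z ^ 2 * ψ z) = (z - I / 2) * ((E z - 1) / (4 * sh z ^ 2 * ch z)) := by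
    rw [hcψ]; generalize z - I / 2 = w at hz ⊢; field_simp
  have e2 : sh z / ψ z = (z - I / 2) * (sh z / ch z) := by
    rw [hcψ]; generalize z - I / 2 = w at hz ⊢; field_simp
  rw [e1, e2]
  ring

lemma f_lim_zero : Tendsto (fun z => z * f z) (𝓝[≠] 0) (𝓝 0) := by
  obtain ⟨ψ, hψc, hψ0, hsψ⟩ := exists_sh
  obtain ⟨φ, hφc, hφ0, hEφ⟩ := exists_E
  have hcc := (ch_diff 0).continuousAt
  have hlim : ContinuousAt (fun z => z * (φ z / (2 * ψ z ^ 2 * ch z))) 0 := by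
    have : 2 * ψ 0 ^ 2 * ch 0 ≠ 0 := by simp [hψ0, ch_zero]
    fun_prop (disch := assumption)
  have hlim' := hlim.tendsto.mono_left (nhdsWithin_le_nhds (s := {0}ᶜ))
  rw [zero_mul] at hlim'
  refine hlim'.congr' ?_
  filter_upwards [eventually_ne 0, self_mem_nhdsWithin] with z ⟨hs, hc⟩ hz
  have hz : z ≠ 0 := hz
  have hψz : ψ z ≠ 0 := by rintro h; exact hs (by rw [hsψ, h, mul_zero])
  rw [f, hEφ, hsψ]
  field_simp
  ring

/-- The singularity at `i` is removable because those of `F` and `f` at `0` are, by the difference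
equation `F_sub`. -/
lemma F_lim_I : Tendsto (fun z => (z - I) * F z) (𝓝[≠] I) (𝓝 0) := by
  have h : Tendsto (fun z : ℂ => z - I) (𝓝[≠] I) (𝓝[≠] 0) := by
    refine tendsto_nhdsWithin_iff.2 ⟨?_, ?_⟩
    · have : ContinuousAt (fun z : ℂ => z - I) I := by fun_prop
      simpa using this.tendsto.mono_left nhdsWithin_le_nhds
    · filter_upwards [self_mem_nhdsWithin] with z hz using sub_ne_zero.2 hz
  have h2 := (F_lim_zero.sub f_lim_zero).comp h
  rw [sub_zero] at h2
  refine h2.congr' ?_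
  filter_upwards [h.eventually (eventually_ne 0)] with z ⟨hs, hc⟩
  have := F_sub _ hs hc
  simp only [Function.comp, ← this, sub_add_cancel]
  ring

lemma g_differentiableAt {z : ℂ} (h0 : 0 ≤ z.im) (h1 : z.im ≤ 1) : DifferentiableAt ℂ g z := by
  refine limUnder_differentiableAt ((eventually_ne z).mono fun w hw => F_differentiableAt hw.1 hw.2) ?_
  by_cases hs : sh z = 0
  · obtain ⟨k, rfl⟩ := sh_eq_zero hs
    simp only [Complex.mul_im, Complex.intCast_re, Complex.I_im, Complex.intCast_im, mul_one,
      zero_mul, add_zero] at h0 h1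
    have h0 : 0 ≤ k := by exact_mod_cast h0
    have h1 : k ≤ 1 := by exact_mod_cast h1
    obtain rfl | rfl : k = 0 ∨ k = 1 := by omega
    · simpa using F_lim_zero
    · simpa using F_lim_I
  by_cases hc : ch z = 0
  · obtain ⟨k, rfl⟩ := ch_eq_zero hc
    have e : (((k : ℂ) + 1 / 2) * I).im = k + 1 / 2 := by simp
    rw [e] at h0 h1
    have h0 : -1 < k := by have : (-1 : ℝ) < k := by linarith
                           exact_mod_cast this
    have h1 : k < 1 := by have : (k : ℝ) < 1 := by linarith
                          exact_mod_cast this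
    obtain rfl : k = 0 := by omega
    have e2 : (((0 : ℤ) : ℂ) + 1 / 2) * I = I / 2 := by push_cast; ring
    rw [e2]
    exact F_lim_half
  have := (F_differentiableAt hs hc).continuousAt
  have h2 : ContinuousAt (fun w => (w - z) * F w) z := by fun_prop
  simpa using h2.tendsto.mono_left nhdsWithin_le_nhds

lemma g_eq {z : ℂ} (hs : sh z ≠ 0) (hc : ch z ≠ 0) : g z = F z :=
  ((F_differentiableAt hs hc).continuousAt.tendsto.mono_left nhdsWithin_le_nhds).limUnder_eq

/-! ### Vertical sides -/

/-- The ends of the strip: `F` is exponentially close to `κ + μ` on the right (`σ = 1`) and to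
`-(κ + μ)` on the left (`σ = -1`). -/
lemma F_sub_le {σ T y : ℝ} (hσ : σ = 1 ∨ σ = -1) (hT : 1 ≤ T) (h0 : 0 ≤ y) (h1 : y ≤ 1) :
    sh ((σ * T : ℝ) + y * I) ≠ 0 ∧ ch ((σ * T : ℝ) + y * I) ≠ 0 ∧
    ‖F ((σ * T : ℝ) + y * I) - σ * (κ + μ)‖ ≤ (64 + 4 * ‖κ‖ + 4 * ‖μ‖) * Real.exp (-(π * T)) := by
  set z : ℂ := (σ * T : ℝ) + y * I with hz
  set u := Real.exp (π * T) with hu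
  have hpi := Real.pi_gt_three
  have hu2 : 2 ≤ u := by nlinarith [Real.add_one_le_exp (π * T)]
  have hu0 : 0 < u := by linarith
  have hre : z.re = σ * T := by simp [hz]
  have him : z.im = y := by simp [hz]
  -- `p` is the dominant exponential of `sh z` and `ch z`, `q` the small one
  obtain ⟨p, q, hp, hq, hsp, hcp⟩ : ∃ p q : ℂ, ‖p‖ = u ∧ ‖q‖ = u⁻¹ ∧
      sh z = σ * ((p - q) / 2) ∧ ch z = (p + q) / 2 := by
    refine ⟨Complex.exp (π * (σ * z)), Complex.exp (-(π * (σ * z))), ?_, ?_, ?_, ?_⟩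
    · rw [Complex.norm_exp, hu]
      rcases hσ with rfl | rfl <;> simp [hre]
    · rw [Complex.norm_exp, hu, ← Real.exp_neg]
      rcases hσ with rfl | rfl <;> simp [hre]
    · rw [sh, Complex.sinh]
      rcases hσ with rfl | rfl <;> simp
      ring
    · rw [ch, Complex.cosh]
      rcases hσ with rfl | rfl <;> simp
      ring
  have hσn : ‖(σ : ℂ)‖ = 1 := by rcases hσ with rfl | rfl <;> simp
  have hσ2 : (σ : ℂ) * σ = 1 := by rcases hσ with rfl | rfl <;> simp
  have hinv : u⁻¹ ≤ u / 2 := by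
    rw [inv_le_iff_one_le_mul₀ hu0]; nlinarith
  have hsl : u / 4 ≤ ‖sh z‖ := by
    rw [hsp, norm_mul, hσn, one_mul, norm_div, Complex.norm_ofNat]
    have := norm_sub_norm_le p q
    rw [hp, hq] at this
    linarith
  have hcl : u / 4 ≤ ‖ch z‖ := by
    rw [hcp, norm_div, Complex.norm_ofNat]
    have := norm_sub_le_norm_add p q
    rw [hp, hq] at this
    linarith
  have hcu : ‖ch z‖ ≤ u := by
    rw [hcp, norm_div, Complex.norm_ofNat]
    have := norm_add_le p q
    rw [hp, hq] at this
    linarith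
  have hE : ‖E z‖ ≤ u ^ 2 := by
    have e : (I * π * z ^ 2).re = -(2 * π * (σ * T) * y) := by
      have : z ^ 2 = ⟨(σ * T) ^ 2 - y ^ 2, 2 * (σ * T) * y⟩ := by
        apply Complex.ext <;> simp [sq, hre, him]
        ring
      rw [this]
      simp
      ring
    rw [E, Complex.norm_exp, e, hu, ← Real.exp_nat_mul, Real.exp_le_exp]
    push_cast
    have : 0 ≤ π * T := by positivity
    rcases hσ with rfl | rfl <;> nlinarith
  have hs : sh z ≠ 0 := norm_pos_iff.1 (by linarith)
  have hc : ch z ≠ 0 := norm_pos_iff.1 (by linarith)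
  refine ⟨hs, hc, ?_⟩
  have hA : ‖A z‖ ≤ 64 * u⁻¹ := by
    have b1 : ‖E z / (4 * sh z ^ 3)‖ ≤ u ^ 2 / (4 * (u / 4) ^ 3) := by
      rw [norm_div, norm_mul, norm_pow, Complex.norm_ofNat]
      gcongr
    have b2 : ‖(E z - 1) / (4 * sh z ^ 2 * ch z)‖ ≤ (u ^ 2 + 1) / (4 * (u / 4) ^ 2 * (u / 4)) := by
      rw [norm_div, norm_mul, norm_mul, norm_pow, Complex.norm_ofNat]
      gcongr
      refine (norm_sub_le _ _).trans ?_
      rw [norm_one]; gcongr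
    have b3 : ‖ch z / (4 * sh z ^ 3)‖ ≤ u / (4 * (u / 4) ^ 3) := by
      rw [norm_div, norm_mul, norm_pow, Complex.norm_ofNat]
      gcongr
    have b4 : u ^ 2 / (4 * (u / 4) ^ 3) + (u ^ 2 + 1) / (4 * (u / 4) ^ 2 * (u / 4))
        + u / (4 * (u / 4) ^ 3) ≤ 64 * u⁻¹ := by
      have : u ^ 2 / (4 * (u / 4) ^ 3) + (u ^ 2 + 1) / (4 * (u / 4) ^ 2 * (u / 4))
        + u / (4 * (u / 4) ^ 3) = 16 * (2 * u ^ 2 + u + 1) / u ^ 3 := by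
        field_simp; ring
      rw [this, ← div_eq_mul_inv, div_le_div_iff₀ (by positivity) hu0]
      have : 0 ≤ u * (32 * u ^ 2 - 16 * u - 16) := by
        apply mul_nonneg hu0.le; nlinarith
      nlinarith
    unfold A
    exact (norm_sub_le _ _).trans ((add_le_add (norm_add_le _ _) le_rfl).trans (by linarith))
  have hq4 : ∀ w : ℂ, u / 4 ≤ ‖w‖ → ‖q / w‖ ≤ 4 * u⁻¹ := by
    intro w hw
    rw [norm_div, hq]
    calc u⁻¹ / ‖w‖ ≤ u⁻¹ / (u / 4) := by gcongr
      _ = 4 * (u⁻¹ * u⁻¹) := by field_simp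
      _ ≤ 4 * (u⁻¹ * 1) := by
        gcongr
        exact inv_le_one_of_one_le₀ (by linarith)
      _ = 4 * u⁻¹ := by ring
  have e1 : ch z / sh z = σ + q / sh z := by
    rw [div_eq_iff hs, add_mul, div_mul_cancel₀ _ hs]
    rw [hsp, hcp]
    linear_combination (-(p - q) / 2) * hσ2
  have e2 : sh z / ch z = σ - σ * (q / ch z) := by
    rw [div_eq_iff hc, sub_mul, mul_assoc, div_mul_cancel₀ _ hc]
    rw [hsp, hcp]
    ring
  have e3 : F z - σ * (κ + μ) = A z + κ * (q / sh z) - μ * (σ * (q / ch z)) := by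
    rw [F, e1, e2]; ring
  rw [e3, Real.exp_neg, ← hu]
  have c1 : ‖κ * (q / sh z)‖ ≤ ‖κ‖ * (4 * u⁻¹) := by
    rw [norm_mul]; gcongr; exact hq4 _ hsl
  have c2 : ‖μ * (σ * (q / ch z))‖ ≤ ‖μ‖ * (4 * u⁻¹) := by
    rw [norm_mul, norm_mul, hσn, one_mul]; gcongr; exact hq4 _ hcl
  exact (norm_sub_le _ _).trans ((add_le_add (norm_add_le _ _) le_rfl).trans (by linarith))

lemma tendsto_side {σ : ℝ} (hσ : σ = 1 ∨ σ = -1) :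
    Tendsto (fun T : ℝ => ∫ y in (0 : ℝ)..1, g ((σ * T : ℝ) + y * I)) atTop (𝓝 (σ * (κ + μ))) := by
  rw [tendsto_iff_norm_sub_tendsto_zero]
  have hlim : Tendsto (fun T : ℝ => (64 + 4 * ‖κ‖ + 4 * ‖μ‖) * Real.exp (-(π * T))) atTop (𝓝 0) := by
    have : Tendsto (fun T : ℝ => π * T) atTop atTop := tendsto_id.const_mul_atTop Real.pi_pos
    simpa using (Real.tendsto_exp_neg_atTop_nhds_zero.comp this).const_mul (64 + 4 * ‖κ‖ + 4 * ‖μ‖)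
  refine squeeze_zero' (Eventually.of_forall fun _ => norm_nonneg _) ?_ hlim
  filter_upwards [eventually_ge_atTop 1] with T hT
  have hcont : ContinuousOn (fun y : ℝ => g ((σ * T : ℝ) + y * I)) (uIcc 0 1) := by
    intro y hy
    rw [uIcc_of_le zero_le_one] at hy
    have hg : ContinuousAt g ((σ * T : ℝ) + y * I) :=
      (g_differentiableAt (by simpa using hy.1) (by simpa using hy.2)).continuousAt
    exact (ContinuousAt.comp (f := fun y : ℝ => ((σ * T : ℝ) : ℂ) + y * I) hg
      (by fun_prop)).continuousWithinAt
  have : (∫ y in (0 : ℝ)..1, g ((σ * T : ℝ) + y * I)) - σ * (κ + μ)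
      = ∫ y in (0 : ℝ)..1, (g ((σ * T : ℝ) + y * I) - σ * (κ + μ)) := by
    rw [intervalIntegral.integral_sub hcont.intervalIntegrable intervalIntegrable_const]
    simp
  rw [this]
  refine (intervalIntegral.norm_integral_le_of_norm_le_const (C := (64 + 4 * ‖κ‖ + 4 * ‖μ‖) * Real.exp (-(π * T)))
    fun y hy => ?_).trans (by simp)
  rw [uIoc_of_le zero_le_one] at hy
  obtain ⟨hs, hc, h⟩ := F_sub_le hσ hT hy.1.le hy.2
  rwa [g_eq hs hc]

/-! ### Horizontal sides and the limit -/

/-- The integrand after the substitution `a = π x / 2`. -/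
def h (x : ℝ) : ℝ := Real.sin (π * x ^ 2) / (Real.sinh (π * x) * Real.sinh (2 * π * x))

lemma f_im (x : ℝ) : (f x).im = h x := by
  have hs : sh x = (Real.sinh (π * x) : ℝ) := by simp [sh]
  have hc : ch x = (Real.cosh (π * x) : ℝ) := by simp [ch]
  have hd : f x = (E x - 1) / ((2 * Real.sinh (π * x) ^ 2 * Real.cosh (π * x) : ℝ) : ℂ) := by
    rw [f, hs, hc]; push_cast; rfl
  have hE : E x = Complex.exp ((π * x ^ 2 : ℝ) * I) := by
    rw [E]; congr 1; push_cast; ring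
  rw [hd, Complex.div_ofReal_im, Complex.sub_im, hE, Complex.exp_ofReal_mul_I_im, h,
    mul_assoc 2 π x, Real.sinh_two_mul]
  simp only [Complex.one_im, sub_zero]
  congr 1; ring

lemma g_sub_im {x : ℝ} (hx : x ≠ 0) : (g x - g (x + I)).im = h x := by
  have hs : sh x ≠ 0 := by
    have : sh x = (Real.sinh (π * x) : ℝ) := by simp [sh]
    rw [this]
    exact_mod_cast Real.sinh_ne_zero.2 (mul_ne_zero Real.pi_ne_zero hx)
  have hc : ch x ≠ 0 := by
    have : ch x = (Real.cosh (π * x) : ℝ) := by simp [ch]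
    rw [this]
    exact_mod_cast (Real.cosh_pos _).ne'
  rw [g_eq hs hc, g_eq (by rw [sh_add_I]; exact neg_ne_zero.2 hs)
    (by rw [ch_add_I]; exact neg_ne_zero.2 hc), F_sub _ hs hc, f_im]

lemma continuous_d : Continuous (fun x : ℝ => g x - g (x + I)) := by
  refine continuous_iff_continuousAt.2 fun x => ?_
  have h1 : ContinuousAt g (x : ℂ) := (g_differentiableAt (by simp) (by simp)).continuousAt
  have h2 : ContinuousAt g (x + I) := (g_differentiableAt (by simp) (by simp)).continuousAt
  exact (h1.comp (f := fun x : ℝ => (x : ℂ)) (by fun_prop)).sub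
    (h2.comp (f := fun x : ℝ => (x : ℂ) + I) (by fun_prop))

lemma ae_ne : ∀ᵐ x : ℝ, (g x - g (x + I)).im = h x := by
  filter_upwards [compl_mem_ae_iff.2 (measure_singleton (0 : ℝ))] with x hx using g_sub_im hx

lemma h_intervalIntegrable (a b : ℝ) : IntervalIntegrable h volume a b :=
  ((Complex.continuous_im.comp continuous_d).intervalIntegrable a b).congr_ae
    (ae_restrict_of_ae ae_ne)

/-- The imaginary part of Cauchy's theorem for `g` on `[-T, T] × [0, 1]`. The horizontal sides
contribute `∫ (g x - g (x + i))`, whose imaginary part is `∫ h` since `x = 0` is a null set. -/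
lemma integral_eq_sides (T : ℝ) :
    2 * ∫ x in (0 : ℝ)..T, h x
      = (I * (∫ y in (0 : ℝ)..1, g (((-1 : ℝ) * T : ℝ) + y * I))
        - I * ∫ y in (0 : ℝ)..1, g (((1 : ℝ) * T : ℝ) + y * I)).im := by
  have hrect := Complex.integral_boundary_rect_eq_zero_of_differentiableOn g (-T : ℂ) (T + I) (by
    intro z hz
    rw [Complex.mem_reProdIm] at hz
    have h2 := hz.2
    simp only [Complex.neg_im, Complex.ofReal_im, neg_zero, Complex.add_im, Complex.I_im, zero_add,
      uIcc_of_le zero_le_one] at h2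
    exact (g_differentiableAt h2.1 h2.2).differentiableWithinAt)
  simp only [Complex.neg_im, Complex.ofReal_im, neg_zero, Complex.add_im, Complex.I_im, zero_add,
    Complex.neg_re, Complex.ofReal_re, Complex.add_re, Complex.I_re, add_zero, smul_eq_mul,
    Complex.ofReal_zero, zero_mul, Complex.ofReal_one, one_mul] at hrect
  have hg1 : IntervalIntegrable (fun x : ℝ => g x) volume (-T) T := by
    refine Continuous.intervalIntegrable (continuous_iff_continuousAt.2 fun x => ?_) _ _
    have h1 : ContinuousAt g (x : ℂ) := (g_differentiableAt (by simp) (by simp)).continuousAt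
    exact h1.comp (f := fun x : ℝ => (x : ℂ)) (by fun_prop)
  have hg2 : IntervalIntegrable (fun x : ℝ => g (x + I)) volume (-T) T := by
    refine Continuous.intervalIntegrable (continuous_iff_continuousAt.2 fun x => ?_) _ _
    have h1 : ContinuousAt g (x + I) := (g_differentiableAt (by simp) (by simp)).continuousAt
    exact h1.comp (f := fun x : ℝ => (x : ℂ) + I) (by fun_prop)
  rw [← intervalIntegral.integral_sub hg1 hg2] at hrect
  have heven : ∫ x in (-T)..0, h x = ∫ x in (0 : ℝ)..T, h x := by
    have := intervalIntegral.integral_comp_neg (a := 0) (b := T) h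
    rw [neg_zero] at this
    rw [← this]
    refine intervalIntegral.integral_congr fun x _ => ?_
    simp [h]
  have him : (∫ x in (-T)..T, (g x - g (x + I))).im = ∫ x in (-T)..T, h x := by
    have := Complex.imCLM.intervalIntegral_comp_comm (continuous_d.intervalIntegrable (μ := volume) (-T) T)
    simp only [Complex.imCLM_apply] at this
    rw [← this]
    exact intervalIntegral.integral_congr_ae (ae_ne.mono fun x hx _ => hx)
  rw [two_mul]
  nth_rewrite 1 [← heven]
  rw [intervalIntegral.integral_add_adjacent_intervals (h_intervalIntegrable _ _)
    (h_intervalIntegrable _ _), ← him]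
  congr 1
  simp only [one_mul, neg_one_mul, Complex.ofReal_neg] at hrect ⊢
  linear_combination hrect

/-- `h` is dominated by `exp (-π x)`, using `sinh (π x) ≥ π x` and `2 cosh (π x) ≥ exp (π x)`. -/
lemma h_integrable : IntegrableOn h (Ioi 0) := by
  have hexp := exp_neg_integrableOn_Ioi 0 Real.pi_pos
  refine Integrable.mono' hexp (Measurable.aestronglyMeasurable (by unfold h; fun_prop)) ?_
  refine (ae_restrict_iff' measurableSet_Ioi).2 (Eventually.of_forall fun x hx => ?_)
  have hx : 0 < x := hx
  have hpx : 0 < π * x := mul_pos Real.pi_pos hx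
  have h1 : π * x ≤ Real.sinh (π * x) := Real.self_le_sinh_iff.2 hpx.le
  have h2 : Real.exp (π * x) ≤ 2 * Real.cosh (π * x) := by
    rw [Real.cosh_eq]; linarith [Real.exp_pos (-(π * x))]
  have hsin : |Real.sin (π * x ^ 2)| ≤ (π * x) * (π * x) := by
    refine Real.abs_sin_le_abs.trans ?_
    rw [abs_of_pos (by positivity)]
    nlinarith [Real.pi_gt_three, sq_nonneg x, mul_nonneg Real.pi_pos.le (sq_nonneg x)]
  have hs : 0 < Real.sinh (π * x) := hpx.trans_le h1
  have hc := Real.cosh_pos (π * x)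
  rw [h, mul_assoc 2 π x, Real.sinh_two_mul, Real.norm_eq_abs, abs_div,
    abs_of_pos (a := Real.sinh (π * x) * _) (by positivity), neg_mul, Real.exp_neg,
    div_le_iff₀ (by positivity), inv_mul_eq_div, le_div_iff₀ (Real.exp_pos _)]
  calc |Real.sin (π * x ^ 2)| * Real.exp (π * x)
      ≤ ((π * x) * (π * x)) * (2 * Real.cosh (π * x)) := by gcongr
    _ ≤ (Real.sinh (π * x) * Real.sinh (π * x)) * (2 * Real.cosh (π * x)) := by gcongr
    _ = _ := by ring

lemma κ_add_μ_re : (κ + μ).re = (1 - Real.sqrt 2) / 8 := by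
  have hE : E (I / 2) = Complex.exp ((-(π / 4) : ℝ) * I) := by
    rw [E]; congr 1; push_cast
    linear_combination (I * π / 4) * Complex.I_sq
  have hκ : κ.re = 1 / 8 := by
    have : κ = ((1 / 8 : ℝ) : ℂ) + ((-(1 / (4 * π)) : ℝ) : ℂ) * I := by
      rw [κ]; push_cast; ring
    rw [this]; simp
  have hμ : μ.re = -(Real.sqrt 2 / 8) := by
    have : μ = ((1 / 4 : ℝ) : ℂ) * (-(I * (E (I / 2) - 1))) := by
      rw [μ]; push_cast; ring
    rw [this, Complex.re_ofReal_mul, Complex.neg_re, Complex.I_mul_re, Complex.sub_im, hE,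
      Complex.exp_ofReal_mul_I_im, Real.sin_neg, Real.sin_pi_div_four, Complex.one_im]
    ring
  rw [Complex.add_re, hκ, hμ]; ring

lemma integral_h : ∫ x in Ioi (0 : ℝ), h x = (Real.sqrt 2 - 1) / 8 := by
  have h1 := (intervalIntegral_tendsto_integral_Ioi 0 h_integrable tendsto_id).const_mul 2
  have h2 := (((tendsto_side (σ := -1) (Or.inr rfl)).const_mul I).sub
    ((tendsto_side (σ := 1) (Or.inl rfl)).const_mul I))
  have h3 := (Complex.continuous_im.tendsto _).comp h2
  have h4 := tendsto_nhds_unique (h1.congr integral_eq_sides) h3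
  have h5 : (I * (((-1 : ℝ) : ℂ) * (κ + μ)) - I * (((1 : ℝ) : ℂ) * (κ + μ))).im
      = -2 * (κ + μ).re := by
    simp; ring
  rw [h5, κ_add_μ_re] at h4
  linarith

end

end SinhIntegral

theorem stmt_3 :
    ∫ a in Set.Ioi (0:ℝ), Real.sin ((4 / π) * a ^ 2) / (Real.sinh (4 * a) * Real.sinh (2 * a))
      = (π / 16) * (Real.sqrt 2 - 1) := by
  have hpi := Real.pi_pos
  have key := MeasureTheory.integral_comp_mul_left_Ioi SinhIntegral.h 0 (b := 2 / π) (by positivity)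
  rw [mul_zero, SinhIntegral.integral_h, smul_eq_mul] at key
  have hfun : (fun a : ℝ => Real.sin ((4 / π) * a ^ 2) / (Real.sinh (4 * a) * Real.sinh (2 * a)))
      = fun a => SinhIntegral.h (2 / π * a) := by
    funext a
    have e1 : π * (2 / π * a) ^ 2 = 4 / π * a ^ 2 := by field_simp; ring
    have e2 : π * (2 / π * a) = 2 * a := by field_simp
    have e3 : 2 * π * (2 / π * a) = 4 * a := by field_simp; ring
    rw [SinhIntegral.h, e1, e2, e3, mul_comm (Real.sinh (4 * a))]
  rw [hfun, key]
  field_simp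
  ring
end

section
/- The integral over x from 0 to ∞ of 1 / (cosh x · cosh(2x)) equals (π/2) · (√2 − 1). -/
open Real MeasureTheory Set

/-!
With `s = sinh x` one has `cosh x ^ 2 = 1 + s ^ 2` and `cosh (2 * x) = 1 + 2 * s ^ 2`, so the
integrand is `(2 / (1 + 2 * s ^ 2) - 1 / (1 + s ^ 2)) * cosh x`. An antiderivative is therefore
`√2 * arctan (√2 * sinh x) - arctan (sinh x)`, which vanishes at `0` and tends to
`(√2 - 1) * (π / 2)` at infinity. The integrand being positive, its integrability is automatic.
-/

theorem hasDerivAt_antideriv (x : ℝ) :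
    HasDerivAt (fun x => √2 * arctan (√2 * sinh x) - arctan (sinh x))
      (1 / (cosh x * cosh (2 * x))) x := by
  have hd := ((((hasDerivAt_sinh x).const_mul √2).arctan).const_mul √2).sub
    (hasDerivAt_sinh x).arctan
  refine hd.congr_deriv ?_
  have h2 : √2 ^ 2 = (2 : ℝ) := Real.sq_sqrt (by norm_num)
  have hc : 0 < cosh x := cosh_pos x
  have hs : 1 + sinh x ^ 2 = cosh x ^ 2 := by rw [cosh_sq]; ring
  have hdouble : cosh (2 * x) = 1 + 2 * sinh x ^ 2 := by rw [cosh_two_mul, cosh_sq]; ring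
  have hpos : 0 < 1 + 2 * sinh x ^ 2 := by positivity
  rw [mul_pow, h2, hs, hdouble]
  have hsplit : √2 * (1 / (1 + 2 * sinh x ^ 2) * (√2 * cosh x))
      = 2 * cosh x / (1 + 2 * sinh x ^ 2) := by
    linear_combination (cosh x / (1 + 2 * sinh x ^ 2)) * h2
  rw [hsplit]
  field_simp
  rw [cosh_sq]
  ring

theorem tendsto_antideriv :
    Filter.Tendsto (fun x => √2 * arctan (√2 * sinh x) - arctan (sinh x)) Filter.atTop
      (nhds (√2 * (π / 2) - π / 2)) := by
  have hsinh : Filter.Tendsto sinh Filter.atTop Filter.atTop :=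
    Filter.tendsto_atTop_mono' _
      ((Filter.eventually_ge_atTop 0).mono fun x hx => self_le_sinh_iff.2 hx) Filter.tendsto_id
  have harctan : Filter.Tendsto arctan Filter.atTop (nhds (π / 2)) :=
    tendsto_arctan_atTop.mono_right nhdsWithin_le_nhds
  exact ((harctan.comp (hsinh.const_mul_atTop (by positivity : (0 : ℝ) < √2))).const_mul √2).sub
    (harctan.comp hsinh)

theorem stmt_4 :
    ∫ x in Set.Ioi (0:ℝ), 1 / (Real.cosh x * Real.cosh (2 * x))
      = (π / 2) * (Real.sqrt 2 - 1) := by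
  rw [integral_Ioi_of_hasDerivAt_of_nonneg' (fun x _ => hasDerivAt_antideriv x)
    (fun x _ => by have := cosh_pos x; have := cosh_pos (2 * x); positivity) tendsto_antideriv]
  simp only [sinh_zero, mul_zero, arctan_zero]
  ring
end

section
/- The integral over x from 0 to ∞ of x / sinh x equals π²/4. -/
open Real MeasureTheory Set

/-! On the half-line, the geometric series gives
`x / sinh x = 2 x e⁻ˣ / (1 - e⁻²ˣ) = ∑ₙ 2 x e^{-(2n+1)x}`.
The terms are nonnegative with integrals `2 / (2n+1)²` (`integral_term`), which form a summable
series, so summation and integration commute. The value is therefore twice the sum of the inverse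
odd squares, and that sum is `π²/6 - (1/4) π²/6 = π²/8` (`hasSum_odd_sq`). -/

lemma integrableOn_term {b : ℝ} (hb : 0 < b) :
    IntegrableOn (fun x : ℝ => 2 * (x * rexp (-(b * x)))) (Ioi 0) := by
  have h := integrableOn_rpow_mul_exp_neg_mul_rpow (p := 1) (s := 1) (b := b)
    (by norm_num) one_pos hb
  simp only [Real.rpow_one, neg_mul] at h
  exact h.const_mul 2

lemma integral_term {b : ℝ} (hb : 0 < b) :
    ∫ x in Ioi (0 : ℝ), 2 * (x * rexp (-(b * x))) = 2 / b ^ 2 := by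
  have h := Real.integral_rpow_mul_exp_neg_mul_Ioi (a := 2) (r := b) two_pos hb
  norm_num [Real.Gamma_two] at h
  rw [integral_const_mul, h]
  field_simp

/-- Splitting `ζ(2)` by parity: the even terms sum to a quarter of the whole. -/
lemma hasSum_odd_sq : HasSum (fun n : ℕ => 2 / (2 * (n : ℝ) + 1) ^ 2) (π ^ 2 / 4) := by
  have hz := hasSum_zeta_two
  have he : HasSum (fun n : ℕ => (1 : ℝ) / ((2 * n : ℕ) : ℝ) ^ 2) (1 / 4 * (π ^ 2 / 6)) := by
    refine (hz.mul_left (1 / 4)).congr_fun fun n => ?_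
    push_cast
    rw [mul_pow, one_div_mul_one_div]
    norm_num
  have hs : Summable (fun n : ℕ => (1 : ℝ) / ((2 * n + 1 : ℕ) : ℝ) ^ 2) :=
    hz.summable.comp_injective (i := fun n : ℕ => 2 * n + 1) (fun a b h => by grind)
  have hu := (HasSum.even_add_odd (f := fun n : ℕ => (1 : ℝ) / (n : ℝ) ^ 2) he hs.hasSum).unique hz
  have ho := hs.hasSum.mul_left 2
  rw [show 2 * ∑' n : ℕ, (1 : ℝ) / ((2 * n + 1 : ℕ) : ℝ) ^ 2 = π ^ 2 / 4 by linarith] at ho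
  refine ho.congr_fun fun n => ?_
  push_cast
  ring

lemma hasSum_div_sinh {x : ℝ} (hx : 0 < x) :
    HasSum (fun n : ℕ => 2 * (x * rexp (-((2 * (n : ℝ) + 1) * x)))) (x / Real.sinh x) := by
  have hlt : rexp (-(2 * x)) < 1 := by
    rw [← Real.exp_zero]
    exact Real.exp_lt_exp.2 (by linarith)
  have h := (hasSum_geometric_of_lt_one (Real.exp_pos (-(2 * x))).le hlt).mul_left
    (2 * x * rexp (-x))
  have hsum : 2 * x * rexp (-x) * (1 - rexp (-(2 * x)))⁻¹ = x / Real.sinh x := by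
    have hsinh : rexp (-x) * Real.sinh x * 2 = 1 - rexp (-(2 * x)) := by
      have h1 : rexp (-x) * rexp x = 1 := by rw [← Real.exp_add]; simp
      have h2 : rexp (-x) * rexp (-x) = rexp (-(2 * x)) := by rw [← Real.exp_add]; ring_nf
      rw [Real.sinh_eq]
      linear_combination h1 - h2
    have h0 : Real.sinh x ≠ 0 := (Real.sinh_pos_iff.2 hx).ne'
    have h1 := Real.exp_ne_zero (-x)
    rw [← hsinh]
    field_simp
  rw [hsum] at h
  refine h.congr_fun fun n => ?_
  rw [← Real.exp_nat_mul, mul_assoc (2 * x), ← Real.exp_add, ← mul_assoc]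
  congr 2
  ring

theorem stmt_5 :
    ∫ x in Set.Ioi (0:ℝ), x / Real.sinh x = π ^ 2 / 4 := by
  have hpos (n : ℕ) : (0 : ℝ) < 2 * n + 1 := by positivity
  have hnorm (n : ℕ) : ∫ x in Ioi (0 : ℝ), ‖2 * (x * rexp (-((2 * (n : ℝ) + 1) * x)))‖
      = 2 / (2 * (n : ℝ) + 1) ^ 2 := by
    rw [← integral_term (hpos n)]
    refine setIntegral_congr_fun measurableSet_Ioi fun x hx => ?_
    have hx' : (0 : ℝ) < x := hx
    exact Real.norm_of_nonneg (by positivity)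
  have h := hasSum_integral_of_summable_integral_norm (μ := volume.restrict (Ioi (0 : ℝ)))
    (F := fun (n : ℕ) x => 2 * (x * rexp (-((2 * (n : ℝ) + 1) * x))))
    (fun n => integrableOn_term (hpos n)) (by simpa only [hnorm] using hasSum_odd_sq.summable)
  simp only [fun n : ℕ => integral_term (hpos n)] at h
  rw [← h.unique hasSum_odd_sq]
  exact setIntegral_congr_fun measurableSet_Ioi fun x hx => (hasSum_div_sinh hx).tsum_eq.symm
end

section
/- For every real number p > 0, the double integral over x from 0 to ∞ and a from 0 to ∞ of cos(p a x) / (cosh x · cosh a) equals (π/2) times the integral over x from 0 to ∞ of 1 / (cosh x · cosh((π/2) p x)). -/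
open Real MeasureTheory Set

/-!
Integrating out `a` first, the claim reduces to the Fourier cosine transform of `1 / cosh`,
`∫_0^∞ cos (t a) / cosh a da = (π / 2) / cosh (π t / 2)`, taken at `t = p x`.

The transform is a Beta integral. With `s = sigmoid (2 a) = exp a / (2 cosh a)`, so that
`1 - s = exp (-a) / (2 cosh a)` and `ds = 2 s (1 - s) da`, the integrand
`s ^ (u - 1) * (1 - s) ^ (v - 1)` of `B(u, v)` at `u = (1 + i t) / 2`, `v = (1 - i t) / 2` becomes
`exp (i t a) / cosh a` on the whole line. Since `u + v = 1`, the reflection formula gives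
`B(u, v) = Γ(u) Γ(1 - u) = π / sin (π u) = π / cosh (π t / 2)`. The case `t = 0` also gives the
integrability of `1 / cosh`, which dominates everything needed for Fubini.
-/

lemma log_sigmoid_two_mul (a : ℝ) :
    Real.log (sigmoid (2 * a)) = a - Real.log (2 * Real.cosh a) := by
  have hc := Real.cosh_pos a
  have h : sigmoid (2 * a) = Real.exp a / (2 * Real.cosh a) := by
    rw [sigmoid_def, Real.cosh_eq, show -(2 * a) = -a + -a by ring, Real.exp_add, Real.exp_neg]
    field_simp
  rw [h, Real.log_div (Real.exp_pos a).ne' (by positivity), Real.log_exp]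

lemma log_one_sub_sigmoid_two_mul (a : ℝ) :
    Real.log (1 - sigmoid (2 * a)) = -a - Real.log (2 * Real.cosh a) := by
  rw [← sigmoid_neg, show -(2 * a) = 2 * (-a) by ring, log_sigmoid_two_mul, Real.cosh_neg]

/-- The Beta integrand at `((1 + i t) / 2, (1 - i t) / 2)`, pulled back along
`a ↦ sigmoid (2 a)` with its Jacobian, is `exp (i t a) / cosh a`. -/
lemma beta_integrand_comp_sigmoid (t a : ℝ) :
    |sigmoid (2 * a) * (1 - sigmoid (2 * a)) * 2| •
      (((sigmoid (2 * a) : ℝ) : ℂ) ^ ((1 / 2 + t / 2 * Complex.I : ℂ) - 1) *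
        (1 - ((sigmoid (2 * a) : ℝ) : ℂ)) ^ ((1 / 2 - t / 2 * Complex.I : ℂ) - 1))
      = Complex.exp (t * a * Complex.I) / Real.cosh a := by
  have hs := sigmoid_pos (2 * a)
  have hs' : 0 < 1 - sigmoid (2 * a) := sub_pos.2 (sigmoid_lt_one _)
  have hc := Real.cosh_pos a
  have h2c : 0 < 2 * Real.cosh a := by positivity
  have hJ : sigmoid (2 * a) * (1 - sigmoid (2 * a)) * 2 = 2 / (2 * Real.cosh a) ^ 2 := by
    rw [← Real.exp_log (mul_pos hs hs'), Real.log_mul hs.ne' hs'.ne', log_sigmoid_two_mul,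
      log_one_sub_sigmoid_two_mul,
      show a - Real.log (2 * Real.cosh a) + (-a - Real.log (2 * Real.cosh a))
        = -(Real.log (2 * Real.cosh a) + Real.log (2 * Real.cosh a)) by ring,
      Real.exp_neg, Real.exp_add, Real.exp_log h2c]
    field_simp
  rw [abs_of_pos (by positivity), hJ,
    show (1 : ℂ) - ((sigmoid (2 * a) : ℝ) : ℂ) = ((1 - sigmoid (2 * a) : ℝ) : ℂ) by push_cast; rfl,
    Complex.cpow_def_of_ne_zero (by exact_mod_cast hs.ne'),
    Complex.cpow_def_of_ne_zero (by exact_mod_cast hs'.ne'),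
    ← Complex.ofReal_log hs.le, ← Complex.ofReal_log hs'.le, log_sigmoid_two_mul,
    log_one_sub_sigmoid_two_mul, ← Complex.exp_add]
  have he : ((a - Real.log (2 * Real.cosh a) : ℝ) : ℂ) * ((1 / 2 + t / 2 * Complex.I : ℂ) - 1)
      + ((-a - Real.log (2 * Real.cosh a) : ℝ) : ℂ) * ((1 / 2 - t / 2 * Complex.I : ℂ) - 1)
      = t * a * Complex.I + ((Real.log (2 * Real.cosh a) : ℝ) : ℂ) := by
    push_cast; ring
  rw [he, Complex.exp_add, ← Complex.ofReal_exp, Real.exp_log h2c, Complex.real_smul]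
  have hc' : ((Real.cosh a : ℝ) : ℂ) ≠ 0 := by exact_mod_cast hc.ne'
  push_cast at hc' ⊢
  field_simp

lemma hasDerivAt_sigmoid_two_mul (a : ℝ) :
    HasDerivAt (fun a => sigmoid (2 * a)) (sigmoid (2 * a) * (1 - sigmoid (2 * a)) * 2) a := by
  have h := (hasDerivAt_id' a).const_mul (2 : ℝ)
  rw [mul_one] at h
  exact (hasDerivAt_sigmoid (2 * a)).comp a h

lemma injective_sigmoid_two_mul : Function.Injective (fun a : ℝ => sigmoid (2 * a)) :=
  fun a b h => by have := sigmoid_injective h; linarith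

lemma image_sigmoid_two_mul : (fun a : ℝ => sigmoid (2 * a)) '' univ = Ioo 0 1 := by
  rw [image_univ, ← range_sigmoid]
  exact (mul_left_surjective₀ (two_ne_zero (α := ℝ))).range_comp sigmoid

lemma integrable_exp_div_cosh (t : ℝ) :
    Integrable (fun a : ℝ => Complex.exp (t * a * Complex.I) / Real.cosh a) := by
  have h := Complex.betaIntegral_convergent (u := 1 / 2 + t / 2 * Complex.I)
    (v := 1 / 2 - t / 2 * Complex.I) (by simp) (by simp)
  rw [intervalIntegrable_iff_integrableOn_Ioo_of_le zero_le_one, ← image_sigmoid_two_mul,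
    integrableOn_image_iff_integrableOn_abs_deriv_smul MeasurableSet.univ
      (fun a _ => (hasDerivAt_sigmoid_two_mul a).hasDerivWithinAt)
      injective_sigmoid_two_mul.injOn, integrableOn_univ] at h
  simpa only [beta_integrand_comp_sigmoid] using h

lemma integral_exp_div_cosh (t : ℝ) :
    ∫ a : ℝ, Complex.exp (t * a * Complex.I) / Real.cosh a
      = ((π / Real.cosh (π / 2 * t) : ℝ) : ℂ) := by
  have hB : Complex.betaIntegral (1 / 2 + t / 2 * Complex.I) (1 / 2 - t / 2 * Complex.I)
      = ∫ a : ℝ, Complex.exp (t * a * Complex.I) / Real.cosh a := by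
    rw [Complex.betaIntegral, intervalIntegral.integral_of_le zero_le_one,
      integral_Ioc_eq_integral_Ioo, ← image_sigmoid_two_mul,
      integral_image_eq_integral_abs_deriv_smul MeasurableSet.univ
        (fun a _ => (hasDerivAt_sigmoid_two_mul a).hasDerivWithinAt)
        injective_sigmoid_two_mul.injOn, setIntegral_univ]
    simp only [beta_integrand_comp_sigmoid]
  have hG := Complex.Gamma_mul_Gamma_eq_betaIntegral (s := 1 / 2 + t / 2 * Complex.I)
    (t := 1 / 2 - t / 2 * Complex.I) (by simp) (by simp)
  rw [show (1 / 2 + t / 2 * Complex.I : ℂ) + (1 / 2 - t / 2 * Complex.I) = 1 by ring,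
    Complex.Gamma_one, one_mul, hB,
    show (1 / 2 - t / 2 * Complex.I : ℂ) = 1 - (1 / 2 + t / 2 * Complex.I) by ring,
    Complex.Gamma_mul_Gamma_one_sub,
    show (π : ℂ) * (1 / 2 + t / 2 * Complex.I) = (π / 2 * t : ℂ) * Complex.I + π / 2 by ring,
    Complex.sin_add_pi_div_two, Complex.cos_mul_I] at hG
  rw [← hG]
  push_cast
  rfl

/-- The Fourier cosine transform of `1 / cosh`. -/
lemma integral_cos_div_cosh (t : ℝ) :
    ∫ a in Ioi (0 : ℝ), Real.cos (t * a) / Real.cosh a = π / 2 / Real.cosh (π / 2 * t) := by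
  have h := integral_re (𝕜 := ℂ) (integrable_exp_div_cosh t)
  rw [integral_exp_div_cosh] at h
  have hre : ∀ a : ℝ, RCLike.re (Complex.exp (t * a * Complex.I) / Real.cosh a : ℂ)
      = Real.cos (t * |a|) / Real.cosh |a| := by
    intro a
    have hcos : Real.cos (t * |a|) = Real.cos (t * a) := by
      rcases abs_choice a with h | h <;> simp [h]
    rw [Real.cosh_abs, hcos, RCLike.re_eq_complex_re, Complex.div_ofReal_re,
      ← Complex.ofReal_mul, Complex.exp_ofReal_mul_I_re]
  simp only [hre] at h
  rw [integral_comp_abs (f := fun a => Real.cos (t * a) / Real.cosh a)] at h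
  rw [RCLike.re_eq_complex_re, Complex.ofReal_re] at h
  rw [div_right_comm, ← h]
  ring

lemma integrable_one_div_cosh : Integrable (fun a : ℝ => 1 / Real.cosh a) := by
  have h := (integrable_exp_div_cosh 0).re
  refine h.congr (Filter.Eventually.of_forall fun a => ?_)
  simp only [RCLike.re_eq_complex_re, Complex.div_ofReal_re]
  simp

theorem stmt_6 (p : ℝ) (hp : 0 < p) :
    ∫ q in (Set.Ioi (0:ℝ)) ×ˢ (Set.Ioi (0:ℝ)),
        Real.cos (p * q.2 * q.1) / (Real.cosh q.1 * Real.cosh q.2)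
      = (π / 2) * ∫ x in Set.Ioi (0:ℝ), 1 / (Real.cosh x * Real.cosh ((π / 2) * p * x)) := by
  have hint : Integrable (fun q : ℝ × ℝ =>
      Real.cos (p * q.2 * q.1) / (Real.cosh q.1 * Real.cosh q.2)) (volume.prod volume) := by
    refine (integrable_one_div_cosh.mul_prod integrable_one_div_cosh).mono' ?_ ?_
    · refine Continuous.aestronglyMeasurable (Continuous.div ?_ ?_ fun q => ?_)
      · fun_prop
      · exact (Real.continuous_cosh.comp continuous_fst).mul
          (Real.continuous_cosh.comp continuous_snd)
      · exact (mul_pos (Real.cosh_pos _) (Real.cosh_pos _)).ne'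
    · refine Filter.Eventually.of_forall fun q => ?_
      have h := mul_pos (Real.cosh_pos q.1) (Real.cosh_pos q.2)
      rw [Real.norm_eq_abs, abs_div, abs_of_pos h, div_mul_div_comm, one_mul]
      gcongr
      exact Real.abs_cos_le_one _
  rw [Measure.volume_eq_prod, setIntegral_prod _ hint.integrableOn, ← integral_const_mul]
  refine integral_congr_ae (Filter.Eventually.of_forall fun x => ?_)
  have hx := (Real.cosh_pos x).ne'
  have hpx := (Real.cosh_pos (π / 2 * p * x)).ne'
  calc ∫ a in Ioi (0 : ℝ), Real.cos (p * a * x) / (Real.cosh x * Real.cosh a)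
      = ∫ a in Ioi (0 : ℝ), 1 / Real.cosh x * (Real.cos (p * x * a) / Real.cosh a) := by
        congr 1 with a
        rw [mul_right_comm p a x, div_mul_div_comm, one_mul]
    _ = π / 2 * (1 / (Real.cosh x * Real.cosh (π / 2 * p * x))) := by
        rw [integral_const_mul, integral_cos_div_cosh, ← mul_assoc (π / 2) p x]
        field_simp
end

section
/- For every real number p > 0, π times the integral over a from 0 to ∞ of sin(p a²) / (sinh(p π a) · sinh a) equals the square of the integral over y from 0 to ∞ of cos(p y²)/cosh y, plus the square of the integral over y from 0 to ∞ of sin(p y²)/cosh y. -/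
/-!
Write `h x = exp (i p x²) / cosh x` (`chirp p`) and let `C`, `S` be the two integrals on the right.
As `h` is even, `∫ h = 2 (C + i S)` over the line, so `(∫ conj h) (∫ h) = 4 (C² + S²)`. This product
is also the integral of the convolution `conj h ⋆ h`, which is where Fubini is used. At `v` the
convolution is

  `exp (i p v²) ∫ exp (-2 i p v t) / (cosh t · cosh (t - v)) dt`,

a Fourier transform that can be computed: `sinh v / (cosh t · cosh (t - v)) = tanh t - tanh (t - v)`,
so one integration by parts reduces it to the Fourier transform of `sech²`
(`integral_exp_div_cosh_mul_cosh`), and the latter is the Beta integral `2 B(1 + i s/2, 1 - i s/2)`,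
equal to `π s / sinh (π s / 2)` by the reflection formula (`integral_exp_div_cosh_sq`). The
convolution therefore equals `2 π sin (p v²) / (sinh (p π v) · sinh v)` for `v ≠ 0`
(`convolution_chirp`), an even function of `v`. Comparing the two values of the integral and
dividing by `4` gives the identity.
-/

open Real MeasureTheory Set

lemma one_add_sq_le_two_mul_cosh (x : ℝ) : 1 + x ^ 2 ≤ 2 * Real.cosh x := by
  have h : (x / 2) ^ 2 ≤ Real.sinh (x / 2) ^ 2 := by
    rw [sq_le_sq]
    rcases le_total 0 (x / 2) with h | h
    · rw [abs_of_nonneg h, abs_of_nonneg (Real.sinh_nonneg_iff.2 h)]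
      exact Real.self_le_sinh_iff.2 h
    · rw [abs_of_nonpos h, abs_of_nonpos (Real.sinh_nonpos_iff.2 h)]
      exact neg_le_neg (Real.sinh_le_self_iff.2 h)
  have h2 : Real.cosh x = Real.cosh (x / 2) ^ 2 + Real.sinh (x / 2) ^ 2 := by
    rw [← Real.cosh_two_mul]; congr 1; ring
  have h3 := Real.cosh_sq (x / 2)
  nlinarith

/-- A continuous function dominated by `1 / cosh` is integrable. -/
lemma integrable_of_norm_le_inv_cosh {f : ℝ → ℂ} (hf : Continuous f) (C : ℝ)
    (h : ∀ x, ‖f x‖ ≤ C * (Real.cosh x)⁻¹) : Integrable f := by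
  have hC : 0 ≤ C := by simpa using (norm_nonneg _).trans (h 0)
  refine (integrable_inv_one_add_sq.const_mul (C * 2)).mono' hf.aestronglyMeasurable
    (Filter.Eventually.of_forall fun x => (h x).trans ?_)
  rw [mul_assoc]
  gcongr
  have := one_add_sq_le_two_mul_cosh x
  have h1 := Real.cosh_pos x
  rw [← div_eq_mul_inv, inv_eq_one_div, div_le_div_iff₀ h1 (by positivity)]
  linarith

lemma norm_exp_ofReal_mul_I' (t : ℝ) {z : ℂ} (hz : z = t * Complex.I) : ‖Complex.exp z‖ = 1 := by
  rw [hz, Complex.norm_exp_ofReal_mul_I]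

/-- With `σ` the logistic function, whose derivative is `σ (1 - σ)`, this expresses the Jacobian of
`y ↦ σ (2 y)` through `sech² y`. -/
lemma sigmoid_two_mul_eq (y : ℝ) :
    Real.sigmoid (2 * y) * (1 - Real.sigmoid (2 * y)) = 1 / (4 * Real.cosh y ^ 2) := by
  rw [← Real.sigmoid_neg, Real.sigmoid_def, Real.sigmoid_def, Real.cosh_eq, neg_neg]
  have h1 : rexp (2 * y) = rexp y ^ 2 := by rw [← Real.exp_nat_mul]; norm_num
  have h2 : rexp (-(2 * y)) = (rexp y ^ 2)⁻¹ := by rw [Real.exp_neg, h1]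
  rw [h1, h2, Real.exp_neg]
  have := Real.exp_pos y
  field_simp
  ring

lemma sigmoid_cpow_mul (y : ℝ) (c : ℂ) :
    (Real.sigmoid (2 * y) : ℂ) ^ c * (1 - (Real.sigmoid (2 * y) : ℂ)) ^ (-c)
      = Complex.exp (2 * y * c) := by
  have hp := Real.sigmoid_pos (2 * y)
  have hp' := Real.sigmoid_pos (-(2 * y))
  have hlog : Real.log (Real.sigmoid (2 * y)) - Real.log (Real.sigmoid (-(2 * y))) = 2 * y := by
    rw [← Real.sigmoid_mul_rexp_neg, Real.log_mul hp.ne' (Real.exp_pos _).ne', Real.log_exp]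
    ring
  have h1 : (1 - (Real.sigmoid (2 * y) : ℂ)) = ((Real.sigmoid (-(2 * y)) : ℝ) : ℂ) := by
    rw [Real.sigmoid_neg]; push_cast; ring
  rw [h1, Complex.cpow_def_of_ne_zero (by exact_mod_cast hp.ne'),
    Complex.cpow_def_of_ne_zero (by exact_mod_cast hp'.ne'), ← Complex.exp_add,
    ← Complex.ofReal_log hp.le, ← Complex.ofReal_log hp'.le]
  congr 1
  have : (2 * y : ℂ) = Real.log (Real.sigmoid (2 * y)) - Real.log (Real.sigmoid (-(2 * y))) := by
    rw [← Complex.ofReal_sub, hlog]; push_cast; ring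
  rw [this]; ring

/-- The Fourier transform of `sech²`. The substitution `x = σ (2 y)` turns the integral into a Beta
integral, which the reflection formula for `Γ` evaluates. -/
lemma integral_exp_div_cosh_sq (s : ℝ) (hs : s ≠ 0) :
    ∫ y : ℝ, Complex.exp (s * y * Complex.I) / (Real.cosh y : ℂ) ^ 2
      = π * s / Complex.sinh (π * s / 2) := by
  set c : ℂ := s * Complex.I / 2 with hc
  have hc0 : c ≠ 0 := by simp [hc, hs]
  have hbeta : Complex.betaIntegral (1 + c) (1 - c)
      = ∫ y : ℝ, Complex.exp (s * y * Complex.I) / (2 * (Real.cosh y : ℂ) ^ 2) := by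
    have himg : (fun y : ℝ => Real.sigmoid (2 * y)) '' univ = Ioo 0 1 := by
      rw [image_univ, ← Real.range_sigmoid]
      exact (mul_left_surjective₀ (two_ne_zero' ℝ)).range_comp Real.sigmoid
    have hder : ∀ y ∈ (univ : Set ℝ), HasDerivWithinAt (fun y : ℝ => Real.sigmoid (2 * y))
        (1 / (2 * Real.cosh y ^ 2)) univ y := by
      intro y _
      have h := (Real.hasDerivAt_sigmoid (2 * y)).comp y ((hasDerivAt_id y).const_mul 2)
      rw [sigmoid_two_mul_eq] at h
      refine (h.congr_deriv ?_).hasDerivWithinAt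
      have := Real.cosh_pos y
      field_simp
      norm_num
    have hinj : InjOn (fun y : ℝ => Real.sigmoid (2 * y)) univ := by
      intro a _ b _ hab
      have := Real.sigmoid_injective hab
      linarith
    rw [Complex.betaIntegral, intervalIntegral.integral_of_le zero_le_one,
      integral_Ioc_eq_integral_Ioo, ← himg,
      integral_image_eq_integral_abs_deriv_smul MeasurableSet.univ hder hinj, setIntegral_univ]
    congr 1
    ext y
    rw [show 1 + c - 1 = c by ring, show 1 - c - 1 = -c by ring, sigmoid_cpow_mul,
      abs_of_pos (by have := Real.cosh_pos y; positivity), Complex.real_smul,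
      show 2 * (y : ℂ) * c = s * y * Complex.I by rw [hc]; ring]
    push_cast
    ring
  have hG := Complex.Gamma_mul_Gamma_eq_betaIntegral (s := 1 + c) (t := 1 - c)
    (by simp [hc]) (by simp [hc])
  have hrefl := Complex.Gamma_mul_Gamma_one_sub c
  rw [show (1 + c) + (1 - c) = ((1 : ℕ) : ℂ) + 1 by push_cast; ring, Complex.Gamma_nat_eq_factorial,
    add_comm 1 c, Complex.Gamma_add_one c hc0, mul_assoc, hrefl, add_comm c 1, hbeta] at hG
  have hsin : Complex.sin (π * c) = Complex.sinh (π * s / 2) * Complex.I := by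
    rw [← Complex.sin_mul_I]; congr 1; rw [hc]; ring
  have hhalf : ∀ y : ℝ, Complex.exp (s * y * Complex.I) / (Real.cosh y : ℂ) ^ 2
      = 2 * (Complex.exp (s * y * Complex.I) / (2 * (Real.cosh y : ℂ) ^ 2)) := by
    intro y
    rw [mul_div_assoc', mul_div_mul_left _ _ two_ne_zero]
  simp_rw [hhalf]
  rw [integral_const_mul]
  have : ∫ y : ℝ, Complex.exp (s * y * Complex.I) / (2 * (Real.cosh y : ℂ) ^ 2)
      = c * (π / Complex.sin (π * c)) := by
    rw [hG]; simp
  rw [this, hsin, hc]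
  have hI := Complex.I_ne_zero
  rw [div_mul_eq_div_div_swap, div_eq_mul_inv _ Complex.I]
  field_simp

/-- Translation of `integral_exp_div_cosh_sq`. -/
lemma integral_exp_div_cosh_sub_sq (s v : ℝ) (hs : s ≠ 0) :
    ∫ y : ℝ, Complex.exp (s * y * Complex.I) / (Real.cosh (y - v) : ℂ) ^ 2
      = Complex.exp (s * v * Complex.I) * (π * s / Complex.sinh (π * s / 2)) := by
  rw [← integral_exp_div_cosh_sq s hs, ← integral_const_mul,
    ← integral_sub_right_eq_self
      (fun y : ℝ => Complex.exp (s * v * Complex.I) *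
        (Complex.exp (s * y * Complex.I) / (Real.cosh y : ℂ) ^ 2)) v]
  congr 1
  ext y
  rw [mul_div_assoc', ← Complex.exp_add]
  congr 2
  push_cast
  ring

lemma continuous_exp_ofReal (s : ℝ) :
    Continuous fun y : ℝ => Complex.exp (s * y * Complex.I) := by fun_prop

lemma ofReal_cosh_ne_zero (y : ℝ) : ((Real.cosh y : ℝ) : ℂ) ≠ 0 := by
  exact_mod_cast (Real.cosh_pos y).ne'

lemma integrable_exp_div_cosh_sq (s : ℝ) :
    Integrable fun y : ℝ => Complex.exp (s * y * Complex.I) / (Real.cosh y : ℂ) ^ 2 := by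
  refine integrable_of_norm_le_inv_cosh ?_ 1 ?_
  · have := ofReal_cosh_ne_zero
    exact (continuous_exp_ofReal s).div
      ((Complex.continuous_ofReal.comp Real.continuous_cosh).pow 2) fun x => pow_ne_zero 2 (this x)
  · intro x
    rw [norm_div, norm_exp_ofReal_mul_I' (s * x) (by push_cast; ring), norm_pow, Complex.norm_real,
      Real.norm_of_nonneg (Real.cosh_pos x).le, one_mul, ← one_div]
    have := Real.one_le_cosh x
    gcongr
    nlinarith

lemma integrable_exp_div_cosh_sub_sq (s v : ℝ) :
    Integrable fun y : ℝ => Complex.exp (s * y * Complex.I) / (Real.cosh (y - v) : ℂ) ^ 2 := by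
  have h := ((integrable_exp_div_cosh_sq s).comp_sub_right v).const_mul
    (Complex.exp (s * v * Complex.I))
  refine h.congr (Filter.Eventually.of_forall fun y => ?_)
  simp only
  rw [mul_div_assoc', ← Complex.exp_add]
  congr 2
  push_cast
  ring

lemma integrable_exp_div_cosh_mul_cosh (s v : ℝ) : Integrable fun y : ℝ =>
    Complex.exp (s * y * Complex.I) / (Real.cosh y * Real.cosh (y - v)) := by
  refine integrable_of_norm_le_inv_cosh ?_ 1 ?_
  · have := ofReal_cosh_ne_zero
    refine (continuous_exp_ofReal s).div ?_ fun x => mul_ne_zero (this x) (this _)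
    exact (Complex.continuous_ofReal.comp Real.continuous_cosh).mul
      (Complex.continuous_ofReal.comp (Real.continuous_cosh.comp (continuous_id.sub continuous_const)))
  · intro x
    rw [norm_div, norm_exp_ofReal_mul_I' (s * x) (by push_cast; ring), norm_mul, Complex.norm_real,
      Complex.norm_real, Real.norm_of_nonneg (Real.cosh_pos x).le,
      Real.norm_of_nonneg (Real.cosh_pos _).le, one_mul, ← one_div]
    have := Real.one_le_cosh (x - v)
    have := Real.cosh_pos x
    gcongr
    nlinarith

lemma hasDerivAt_tanh_real (y : ℝ) :
    HasDerivAt (fun y => Real.sinh y / Real.cosh y) (1 / Real.cosh y ^ 2) y := by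
  refine ((Real.hasDerivAt_sinh y).div (Real.hasDerivAt_cosh y) (Real.cosh_pos y).ne').congr_deriv ?_
  congr 1
  have := Real.cosh_sq y
  linarith

/-- The Fourier transform of `y ↦ sech y · sech (y - v)`, obtained by integrating by parts against
`tanh y - tanh (y - v) = sinh v · sech y · sech (y - v)`. -/
lemma integral_exp_div_cosh_mul_cosh (s v : ℝ) (hs : s ≠ 0) (hv : v ≠ 0) :
    ∫ y : ℝ, Complex.exp (s * y * Complex.I) / (Real.cosh y * Real.cosh (y - v))
      = (Complex.exp (s * v * Complex.I) - 1) / (s * Complex.I) / Complex.sinh v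
        * (π * s / Complex.sinh (π * s / 2)) := by
  have hsI : (s * Complex.I : ℂ) ≠ 0 := by simp [hs]
  have hsv : Real.sinh v ≠ 0 := by simpa using hv
  have hsv' : Complex.sinh v ≠ 0 := by rw [← Complex.ofReal_sinh]; exact_mod_cast hsv
  let u : ℝ → ℂ := fun y => Complex.exp (s * y * Complex.I) / (s * Complex.I)
  let u' : ℝ → ℂ := fun y => Complex.exp (s * y * Complex.I)
  let w : ℝ → ℂ := fun y =>
    ((Real.sinh y / Real.cosh y - Real.sinh (y - v) / Real.cosh (y - v) : ℝ) : ℂ)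
  let w' : ℝ → ℂ := fun y => ((1 / Real.cosh y ^ 2 - 1 / Real.cosh (y - v) ^ 2 : ℝ) : ℂ)
  have hw : ∀ y, w y = Complex.sinh v / (Real.cosh y * Real.cosh (y - v)) := by
    intro y
    simp only [w]
    rw [← Complex.ofReal_sinh, ← Complex.ofReal_mul, ← Complex.ofReal_div]
    congr 1
    have h1 := (Real.cosh_pos y).ne'
    have h2 := (Real.cosh_pos (y - v)).ne'
    have h3 : Real.sinh v = Real.sinh y * Real.cosh (y - v) - Real.cosh y * Real.sinh (y - v) := by
      rw [← Real.sinh_sub]; congr 1; ring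
    rw [h3]
    field_simp
  have hdu : ∀ y, HasDerivAt u (u' y) y := by
    intro y
    have h1 : HasDerivAt (fun y : ℝ => (s * y * Complex.I : ℂ)) (s * Complex.I) y := by
      have := ((Complex.ofRealCLM.hasDerivAt (x := y)).const_mul (s : ℂ)).mul_const Complex.I
      simpa using this
    refine (h1.cexp.div_const (s * Complex.I)).congr_deriv ?_
    simp only [u']
    rw [mul_div_assoc, div_self hsI, mul_one]
  have hdw : ∀ y, HasDerivAt w (w' y) y := by
    intro y
    exact ((hasDerivAt_tanh_real y).sub
      ((hasDerivAt_tanh_real (y - v)).comp_sub_const y v)).ofReal_comp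
  have hI1 : ∀ y, (u * w') y = (Complex.exp (s * y * Complex.I) / (Real.cosh y : ℂ) ^ 2
      - Complex.exp (s * y * Complex.I) / (Real.cosh (y - v) : ℂ) ^ 2) / (s * Complex.I) := by
    intro y
    simp only [Pi.mul_apply, u, w']
    push_cast
    ring
  have hI2 : ∀ y, (u' * w) y = Complex.sinh v *
      (Complex.exp (s * y * Complex.I) / (Real.cosh y * Real.cosh (y - v))) := by
    intro y
    simp only [Pi.mul_apply, hw, u']
    ring
  have hI3 : ∀ y, (u * w) y = Complex.sinh v / (s * Complex.I) *
      (Complex.exp (s * y * Complex.I) / (Real.cosh y * Real.cosh (y - v))) := by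
    intro y
    simp only [Pi.mul_apply, hw, u]
    ring
  have hparts := integral_mul_deriv_eq_deriv_mul_of_integrable (u := u) (v := w) (u' := u')
    (v' := w') (fun y _ => hdu y) (fun y _ => hdw y)
    (by
      rw [funext hI1]
      exact ((integrable_exp_div_cosh_sq s).sub (integrable_exp_div_cosh_sub_sq s v)).div_const _)
    (by rw [funext hI2]; exact (integrable_exp_div_cosh_mul_cosh s v).const_mul _)
    (by rw [funext hI3]; exact (integrable_exp_div_cosh_mul_cosh s v).const_mul _)
  have e1 : ∫ y, u y * w' y = ∫ y : ℝ, (Complex.exp (s * y * Complex.I) / (Real.cosh y : ℂ) ^ 2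
      - Complex.exp (s * y * Complex.I) / (Real.cosh (y - v) : ℂ) ^ 2) / (s * Complex.I) :=
    integral_congr_ae (Filter.Eventually.of_forall hI1)
  have e2 : ∫ y, u' y * w y = ∫ y : ℝ, Complex.sinh v *
      (Complex.exp (s * y * Complex.I) / (Real.cosh y * Real.cosh (y - v))) :=
    integral_congr_ae (Filter.Eventually.of_forall hI2)
  rw [e1, e2, integral_div, integral_sub (integrable_exp_div_cosh_sq s)
    (integrable_exp_div_cosh_sub_sq s v), integral_exp_div_cosh_sq s hs,
    integral_exp_div_cosh_sub_sq s v hs, integral_const_mul] at hparts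
  rw [← mul_right_inj' hsv', ← neg_inj, ← hparts]
  field_simp
  ring

/-- The complex Gaussian-phase function `x ↦ exp (i p x²) / cosh x`, whose real and imaginary parts are
the integrands `cos (p x²) / cosh x` and `sin (p x²) / cosh x`. -/
noncomputable def chirp (p : ℝ) (x : ℝ) : ℂ :=
  Complex.exp ((p * x ^ 2 : ℝ) * Complex.I) / (Real.cosh x : ℂ)

lemma integrable_chirp (p : ℝ) : Integrable (chirp p) := by
  refine integrable_of_norm_le_inv_cosh ?_ 1 ?_
  · refine Continuous.div ?_ (Complex.continuous_ofReal.comp Real.continuous_cosh)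
      ofReal_cosh_ne_zero
    fun_prop
  · intro x
    rw [chirp, norm_div, Complex.norm_exp_ofReal_mul_I, Complex.norm_real,
      Real.norm_of_nonneg (Real.cosh_pos x).le, one_mul, one_div]

lemma chirp_eq (p x : ℝ) : chirp p x = (Real.cos (p * x ^ 2) / Real.cosh x : ℝ)
    + (Real.sin (p * x ^ 2) / Real.cosh x : ℝ) * Complex.I := by
  rw [chirp, Complex.exp_mul_I, ← Complex.ofReal_cos, ← Complex.ofReal_sin]
  push_cast
  ring

lemma integral_chirp (p : ℝ) : ∫ x, chirp p x
    = ((2 * ∫ y in Ioi (0:ℝ), Real.cos (p * y ^ 2) / Real.cosh y : ℝ) : ℂ)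
      + ((2 * ∫ y in Ioi (0:ℝ), Real.sin (p * y ^ 2) / Real.cosh y : ℝ) : ℂ) * Complex.I := by
  rw [← integral_comp_abs (f := fun y => Real.cos (p * y ^ 2) / Real.cosh y),
    ← integral_comp_abs (f := fun y => Real.sin (p * y ^ 2) / Real.cosh y)]
  simp only [sq_abs, Real.cosh_abs]
  have hre : ∀ x, (chirp p x).re = Real.cos (p * x ^ 2) / Real.cosh x := fun x => by
    rw [chirp_eq, Complex.add_re, Complex.ofReal_re, Complex.re_ofReal_mul, Complex.I_re]; ring
  have him : ∀ x, (chirp p x).im = Real.sin (p * x ^ 2) / Real.cosh x := fun x => by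
    rw [chirp_eq, Complex.add_im, Complex.ofReal_im, Complex.im_ofReal_mul, Complex.I_im]; ring
  simp_rw [← hre, ← him]
  exact (integral_re_add_im (𝕜 := ℂ) (integrable_chirp p)).symm

/-- The value at `v ≠ 0` of the convolution of `chirp (-p)`, the complex conjugate of `chirp p`, with
`chirp p`. The quadratic exponent collapses to `i (p v² - 2 p v t)`, leaving a Fourier transform at
frequency `-2 p v`. -/
lemma convolution_chirp (p v : ℝ) (hp : p ≠ 0) (hv : v ≠ 0) :
    ∫ t, chirp (-p) t * chirp p (v - t)
      = ((2 * π * (Real.sin (p * v ^ 2) / (Real.sinh (p * π * v) * Real.sinh v)) : ℝ) : ℂ) := by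
  have hs : -2 * p * v ≠ 0 := by positivity
  have h := integral_exp_div_cosh_mul_cosh (-2 * p * v) v hs hv
  have hint : ∀ t, chirp (-p) t * chirp p (v - t) = Complex.exp ((p * v ^ 2 : ℝ) * Complex.I) *
      (Complex.exp ((-2 * p * v : ℝ) * t * Complex.I) / (Real.cosh t * Real.cosh (t - v))) := by
    intro t
    rw [chirp, chirp, div_mul_div_comm, ← Complex.exp_add, mul_div_assoc', ← Complex.exp_add,
      ← Real.cosh_neg (v - t), neg_sub]
    congr 2
    push_cast
    ring
  simp_rw [hint]
  rw [integral_const_mul, h]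
  -- `exp (iθ) (exp (-2iθ) - 1) = -2i sin θ` with `θ = p v²`
  have key : Complex.exp ((p * v ^ 2 : ℝ) * Complex.I) *
      (Complex.exp ((-2 * p * v : ℝ) * v * Complex.I) - 1)
      = -2 * Complex.I * Complex.sin ((p * v ^ 2 : ℝ)) := by
    rw [mul_sub, ← Complex.exp_add, mul_one,
      show ((p * v ^ 2 : ℝ) * Complex.I + (-2 * p * v : ℝ) * v * Complex.I : ℂ)
        = (-(p * v ^ 2 : ℝ) : ℂ) * Complex.I by push_cast; ring,
      Complex.exp_mul_I, Complex.exp_mul_I, Complex.cos_neg, Complex.sin_neg]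
    ring
  have hsh : Complex.sinh (π * (-2 * p * v : ℝ) / 2) = -Complex.sinh (p * π * v) := by
    rw [← Complex.sinh_neg]; congr 1; push_cast; ring
  rw [hsh]
  have hsC : ((-2 * p * v : ℝ) : ℂ) ≠ 0 := by exact_mod_cast hs
  have hI := Complex.I_ne_zero
  calc _ = (Complex.exp ((p * v ^ 2 : ℝ) * Complex.I) *
      (Complex.exp ((-2 * p * v : ℝ) * v * Complex.I) - 1)) / ((-2 * p * v : ℝ) * Complex.I)
        / Complex.sinh v * (π * (-2 * p * v : ℝ) / -Complex.sinh (p * π * v)) := by ring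
    _ = _ := by
      rw [key]
      push_cast at hsC ⊢
      generalize Complex.sinh (p * π * v) = A
      generalize Complex.sinh v = B
      generalize Complex.sin (p * v ^ 2) = S
      generalize (-2 * p * v : ℂ) = c at *
      rw [div_neg, div_div, mul_neg, div_mul_div_comm]
      rw [show -2 * Complex.I * S * (π * c) = (c * Complex.I) * (-2 * S * π) by ring,
        show c * Complex.I * B * A = (c * Complex.I) * (A * B) by ring,
        mul_div_mul_left _ _ (mul_ne_zero hsC hI)]
      ring

theorem stmt_7 (p : ℝ) (hp : 0 < p) :
    π * ∫ a in Set.Ioi (0:ℝ), Real.sin (p * a ^ 2) / (Real.sinh (p * π * a) * Real.sinh a)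
      = (∫ y in Set.Ioi (0:ℝ), Real.cos (p * y ^ 2) / Real.cosh y) ^ 2
        + (∫ y in Set.Ioi (0:ℝ), Real.sin (p * y ^ 2) / Real.cosh y) ^ 2 := by
  have hconv := integral_convolution (ContinuousLinearMap.mul ℝ ℂ) (μ := (volume : Measure ℝ))
    (ν := (volume : Measure ℝ)) (integrable_chirp (-p)) (integrable_chirp p)
  -- The closed form fails only at `v = 0`, where its value is the junk `0 / 0`.
  have hleft : ∫ x, MeasureTheory.convolution (chirp (-p)) (chirp p)
      (ContinuousLinearMap.mul ℝ ℂ) volume x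
      = ((∫ v : ℝ, 2 * π * (Real.sin (p * v ^ 2) / (Real.sinh (p * π * v) * Real.sinh v)) : ℝ) : ℂ) := by
    rw [← integral_complex_ofReal]
    refine integral_congr_ae ?_
    filter_upwards [Measure.ae_ne volume (0 : ℝ)] with v hv
    exact convolution_chirp p v hp.ne' hv
  have heven : ∫ v : ℝ, Real.sin (p * v ^ 2) / (Real.sinh (p * π * v) * Real.sinh v)
      = 2 * ∫ a in Ioi (0:ℝ), Real.sin (p * a ^ 2) / (Real.sinh (p * π * a) * Real.sinh a) := by
    rw [← integral_comp_abs
      (f := fun a => Real.sin (p * a ^ 2) / (Real.sinh (p * π * a) * Real.sinh a))]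
    congr 1
    ext v
    rcases abs_choice v with h | h <;> rw [h]
    rw [mul_neg, Real.sinh_neg, Real.sinh_neg, neg_mul_neg, neg_sq]
  rw [hleft, integral_const_mul, heven, ContinuousLinearMap.mul_apply', integral_chirp,
    integral_chirp] at hconv
  simp only [neg_mul, Real.cos_neg, Real.sin_neg, neg_div, integral_neg, mul_neg] at hconv
  have := congrArg Complex.re hconv
  simp at this
  linarith
end

section
/- For every real number p > 0, the double integral over (x, a) in [0, ∞) × [0, ∞) of cos(p a x) / (cosh x + cosh a) equals the double integral over (y, z) in [0, ∞) × [0, ∞) of cos(p (y² − z²)) / (cosh y · cosh z). -/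
/-!
The substitution `(x, a) = (y + z, y - z)` of the plane has Jacobian determinant `-2`, and
`cosh (y + z) + cosh (y - z) = 2 cosh y cosh z`, `(y + z) (y - z) = y² - z²`. Hence it identifies
the two integrals taken over the whole plane. Both integrands are even in each variable
separately, so each plane integral is four times the integral over the quadrant. Integrability,
needed for Fubini, follows from `1 / cosh y ≤ 2 / (1 + y²)` on the `(y, z)` side, and is carried
to the `(x, a)` side by the substitution.
-/

open Real MeasureTheory Set

/-- The linear map `(y, z) ↦ (y + z, y - z)`. -/
noncomputable def sumDiff : ℝ × ℝ →L[ℝ] ℝ × ℝ :=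
  LinearMap.toContinuousLinearMap
    (Matrix.toLin (Module.Basis.finTwoProd ℝ) (Module.Basis.finTwoProd ℝ) !![1, 1; 1, -1])

lemma sumDiff_apply (q : ℝ × ℝ) : sumDiff q = (q.1 + q.2, q.1 - q.2) := by
  simp [sumDiff, Matrix.toLin_finTwoProd_apply, sub_eq_add_neg]

lemma abs_det_sumDiff : |sumDiff.det| = 2 := by
  have : sumDiff.det = -2 := by
    simp only [sumDiff, LinearMap.det_toContinuousLinearMap, LinearMap.det_toLin,
      Matrix.det_fin_two_of]
    norm_num
  rw [this]; norm_num

lemma sumDiff_injective : Function.Injective sumDiff := by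
  intro q r h
  simp only [sumDiff_apply, Prod.mk.injEq] at h
  ext <;> linarith [h.1, h.2]

lemma sumDiff_image_univ : sumDiff '' univ = univ := by
  rw [image_univ, range_eq_univ]
  intro q
  refine ⟨((q.1 + q.2) / 2, (q.1 - q.2) / 2), ?_⟩
  rw [sumDiff_apply]
  ext <;> simp only <;> ring

lemma integral_eq_two_mul_comp_sumDiff (g : ℝ × ℝ → ℝ) :
    ∫ q, g q = ∫ q, 2 * g (sumDiff q) := by
  have h := integral_image_eq_integral_abs_det_fderiv_smul (volume : Measure (ℝ × ℝ))
    MeasurableSet.univ (fun x _ => sumDiff.hasFDerivWithinAt (s := univ) (x := x))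
    sumDiff_injective.injOn g
  simpa [sumDiff_image_univ, abs_det_sumDiff, -image_univ] using h

lemma integrable_iff_two_mul_comp_sumDiff (g : ℝ × ℝ → ℝ) :
    Integrable g ↔ Integrable fun q => 2 * g (sumDiff q) := by
  have h := integrableOn_image_iff_integrableOn_abs_det_fderiv_smul
    (volume : Measure (ℝ × ℝ))
    MeasurableSet.univ (fun x _ => sumDiff.hasFDerivWithinAt (s := univ) (x := x))
    sumDiff_injective.injOn g
  simpa only [sumDiff_image_univ, abs_det_sumDiff, integrableOn_univ, smul_eq_mul] using h

lemma integral_eq_four_mul_quadrant {f : ℝ × ℝ → ℝ} (hf : Integrable f)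
    (heven : ∀ x y, f (|x|, |y|) = f (x, y)) :
    ∫ q, f q = 4 * ∫ q in Ioi (0 : ℝ) ×ˢ Ioi (0 : ℝ), f q := by
  rw [Measure.volume_eq_prod] at hf ⊢
  rw [setIntegral_prod _ hf.integrableOn, integral_prod _ hf]
  have h1 : ∀ x, ∫ y, f (x, y) = 2 * ∫ y in Ioi (0 : ℝ), f (|x|, y) := by
    intro x
    rw [← integral_comp_abs (f := fun y => f (|x|, y))]
    simp only [heven]
  simp only [h1]
  rw [integral_comp_abs (f := fun x => 2 * ∫ y in Ioi (0 : ℝ), f (x, y)),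
    integral_const_mul]
  ring

lemma integrable_inv_cosh : Integrable fun x : ℝ => (Real.cosh x)⁻¹ := by
  refine ((integrable_inv_one_add_sq).const_mul 2).mono'
    (Real.continuous_cosh.inv₀ fun x => (Real.cosh_pos x).ne').aestronglyMeasurable
    (.of_forall fun x => ?_)
  have hc : (1 + x ^ 2) / 2 ≤ Real.cosh x := by
    have h1 := Real.cosh_two_mul (x / 2)
    have h2 := Real.cosh_sq (x / 2)
    have h3 : (x / 2) ^ 2 ≤ Real.sinh (x / 2) ^ 2 := by
      rw [sq_le_sq]
      rcases le_total 0 (x / 2) with h | h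
      · rw [abs_of_nonneg h, abs_of_nonneg (Real.sinh_nonneg_iff.2 h)]
        exact Real.self_le_sinh_iff.2 h
      · rw [abs_of_nonpos h, abs_of_nonpos (Real.sinh_nonpos_iff.2 h)]
        exact neg_le_neg (Real.sinh_le_self_iff.2 h)
    rw [mul_div_cancel₀ x two_ne_zero] at h1
    nlinarith
  rw [norm_inv, Real.norm_of_nonneg (Real.cosh_pos x).le]
  calc (Real.cosh x)⁻¹ ≤ ((1 + x ^ 2) / 2)⁻¹ := inv_anti₀ (by positivity) hc
    _ = 2 * (1 + x ^ 2)⁻¹ := by rw [inv_div, div_eq_mul_inv]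

lemma integrable_cos_div_cosh_mul_cosh (p : ℝ) : Integrable fun q : ℝ × ℝ =>
    Real.cos (p * (q.1 ^ 2 - q.2 ^ 2)) / (Real.cosh q.1 * Real.cosh q.2) := by
  refine (integrable_inv_cosh.mul_prod integrable_inv_cosh).mono'
    (Continuous.aestronglyMeasurable ?_) (.of_forall fun q => ?_)
  · refine Continuous.div (by fun_prop) ?_ fun q => ?_
    · exact (Real.continuous_cosh.comp continuous_fst).mul
        (Real.continuous_cosh.comp continuous_snd)
    · exact (mul_pos (Real.cosh_pos _) (Real.cosh_pos _)).ne'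
  · have h := mul_pos (Real.cosh_pos q.1) (Real.cosh_pos q.2)
    rw [norm_div, Real.norm_of_nonneg h.le, ← mul_inv, ← one_div]
    exact div_le_div_of_nonneg_right (Real.abs_cos_le_one _) h.le

lemma two_mul_integrand_comp_sumDiff (p : ℝ) (q : ℝ × ℝ) :
    2 * (Real.cos (p * (sumDiff q).2 * (sumDiff q).1) /
        (Real.cosh (sumDiff q).1 + Real.cosh (sumDiff q).2))
      = Real.cos (p * (q.1 ^ 2 - q.2 ^ 2)) / (Real.cosh q.1 * Real.cosh q.2) := by
  simp only [sumDiff_apply]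
  have h1 : p * (q.1 - q.2) * (q.1 + q.2) = p * (q.1 ^ 2 - q.2 ^ 2) := by ring
  have h2 : Real.cosh (q.1 + q.2) + Real.cosh (q.1 - q.2)
      = 2 * (Real.cosh q.1 * Real.cosh q.2) := by
    rw [Real.cosh_add, Real.cosh_sub]; ring
  rw [h1, h2, ← mul_div_assoc, mul_div_mul_left _ _ two_ne_zero]

theorem stmt_9 (p : ℝ) (hp : 0 < p) :
    ∫ q in (Set.Ioi (0:ℝ)) ×ˢ (Set.Ioi (0:ℝ)),
        Real.cos (p * q.2 * q.1) / (Real.cosh q.1 + Real.cosh q.2)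
      = ∫ q in (Set.Ioi (0:ℝ)) ×ˢ (Set.Ioi (0:ℝ)),
          Real.cos (p * (q.1 ^ 2 - q.2 ^ 2)) / (Real.cosh q.1 * Real.cosh q.2) := by
  have hF := integrable_cos_div_cosh_mul_cosh p
  have hG : Integrable fun q : ℝ × ℝ =>
      Real.cos (p * q.2 * q.1) / (Real.cosh q.1 + Real.cosh q.2) := by
    rw [integrable_iff_two_mul_comp_sumDiff]
    simpa only [two_mul_integrand_comp_sumDiff] using hF
  have hFG := integral_eq_two_mul_comp_sumDiff fun q : ℝ × ℝ =>
      Real.cos (p * q.2 * q.1) / (Real.cosh q.1 + Real.cosh q.2)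
  simp only [two_mul_integrand_comp_sumDiff] at hFG
  rw [integral_eq_four_mul_quadrant hF, integral_eq_four_mul_quadrant hG] at hFG
  · linarith
  · intro x y
    simp only [Real.cosh_abs]
    congr 1
    rw [← Real.cos_abs, ← Real.cos_abs (p * y * x)]
    simp only [abs_mul, abs_abs]
  · intro x y
    simp only [Real.cosh_abs, sq_abs]
end
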